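/- arXiv:1606.05443 — 5 statements merged into one kernel-verified Lean document; each statement's English description precedes it below -/
import Mathlib

section
/- Let L ⊆ ℂ be a compact set of zero two-dimensional Lebesgue measure such that for almost every a ∈ ℝ the horizontal line {z ∈ ℂ : Im z = a} does not intersect L, and for almost every b ∈ ℝ the vertical line {z ∈ ℂ : Re z = b} does not intersect L. Then every function f holomorphic on ℂ∖L, such that f and its derivative f′ extend continuously to the closure of ℂ∖L in ℂ and f has a finite limit at infinity, is constant; that is, the 1-continuous analytic capacity a_1(L) is zero. -/
open Filter Set MeasureTheory

/-!
Let `g` and `g'` be the continuous extensions of `f` and `f'`. The lines avoiding `L` are dense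
among the horizontal and among the vertical ones, and along each of them `g` is differentiable with
derivative given by `g'`. Derivatives that converge locally uniformly pass to the limit, so the same
holds along *every* horizontal and vertical line. Hence `g` has continuous partial derivatives, and
they are those of a complex-linear differential. So `g` is entire, and Liouville's theorem applies.
-/

open Topology ContinuousLinearMap

lemma tendsto_cocompact_of_dense {X Y : Type*} [TopologicalSpace X] [R1Space X]
    [TopologicalSpace Y] [RegularSpace Y] {s : Set X} (hs : Dense s) {g : X → Y}
    (hg : Continuous g) {y : Y} (h : Tendsto g (cocompact X ⊓ 𝓟 s) (𝓝 y)) :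
    Tendsto g (cocompact X) (𝓝 y) := by
  rw [← coclosedCompact_eq_cocompact] at h ⊢
  refine (closed_nhds_basis y).tendsto_right_iff.2 fun V ⟨hVy, hV⟩ ↦ ?_
  obtain ⟨K, ⟨hK, hKc⟩, hKV⟩ :=
    hasBasis_coclosedCompact.eventually_iff.1 (eventually_inf_principal.1 (h hVy))
  filter_upwards [hasBasis_coclosedCompact.mem_of_mem ⟨hK, hKc⟩] with x hx
  have hxs : x ∈ closure (Kᶜ ∩ s) := hs.open_subset_closure_inter hK.isOpen_compl hx
  exact closure_minimal (fun w hw ↦ hKV hw.1 hw.2) (hV.preimage hg) hxs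

/-- The union of the lines `p + 𝕜 v` that do not meet `L`. Its density is the topological form
of the condition that almost every line parallel to `v` misses `L`. -/
def linesMissing (𝕜 : Type*) {E : Type*} [AddCommGroup E] [SMul 𝕜 E] (L : Set E) (v : E) : Set E :=
  {p | ∀ t : 𝕜, p + t • v ∉ L}

lemma linesMissing_subset_compl {𝕜 E : Type*} [Ring 𝕜] [AddCommGroup E] [Module 𝕜 E]
    (L : Set E) (v : E) : linesMissing 𝕜 L v ⊆ Lᶜ :=
  fun p hp ↦ by simpa using hp 0

lemma dense_linesMissing_basisOneI {L : Set ℂ} (hH : Dense {a : ℝ | ∀ z ∈ L, z.im ≠ a})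
    (hV : Dense {b : ℝ | ∀ z ∈ L, z.re ≠ b}) (i : Fin 2) :
    Dense (linesMissing ℝ L (Complex.basisOneI i)) := by
  fin_cases i
  · exact (hH.preimage Complex.isOpenMap_im).mono fun p (hp : ∀ z ∈ L, z.im ≠ p.im) t hmem ↦
      hp _ hmem (by simp)
  · exact (hV.preimage Complex.isOpenMap_re).mono fun p (hp : ∀ z ∈ L, z.re ≠ p.re) t hmem ↦
      hp _ hmem (by simp)

lemma hasDerivAt_of_hasLineDerivAt_add_smul {𝕜 E F : Type*} [NontriviallyNormedField 𝕜]
    [AddCommGroup E] [Module 𝕜 E] [NormedAddCommGroup F] [NormedSpace 𝕜 F]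
    {f : E → F} {f' : F} {p v : E} {t : 𝕜} (h : HasLineDerivAt 𝕜 f f' (p + t • v) v) :
    HasDerivAt (fun r : 𝕜 ↦ f (p + r • v)) f' t := by
  have hshift := HasDerivAt.comp_sub_const t t (by simpa [HasLineDerivAt] using! h)
  simpa [add_assoc, ← add_smul] using hshift

lemma hasLineDerivAt_of_dense {𝕜 E F : Type*} [RCLike 𝕜]
    [AddCommGroup E] [Module 𝕜 E] [TopologicalSpace E] [ContinuousAdd E] [ContinuousSMul 𝕜 E]
    [NormedAddCommGroup F] [NormedSpace 𝕜 F]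
    {f f' : E → F} {v : E} {s : Set E} (hs : Dense s) (hf : Continuous f) (hf' : Continuous f')
    (h : ∀ p ∈ s, ∀ t : 𝕜, HasLineDerivAt 𝕜 f (f' (p + t • v)) (p + t • v) v) (p : E) :
    HasLineDerivAt 𝕜 f (f' p) p v := by
  have : (𝓝[s] p).NeBot := mem_closure_iff_nhdsWithin_neBot.1 (hs p)
  -- Continuity into the compact-open topology is what makes the convergence locally uniform.
  let derivOnLine : C(E, C(𝕜, F)) :=
    ContinuousMap.curry ⟨fun q : E × 𝕜 ↦ f' (q.1 + q.2 • v), by fun_prop⟩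
  have derivOnLine_tendsto : TendstoLocallyUniformlyOn (fun q t ↦ f' (q + t • v))
      (fun t ↦ f' (p + t • v)) (𝓝[s] p) univ :=
    tendstoLocallyUniformlyOn_univ.2 <| ContinuousMap.tendsto_iff_tendstoLocallyUniformly.1
      (derivOnLine.continuous.continuousWithinAt (s := s) (x := p))
  have hasDerivAt_line : ∀ᶠ q in 𝓝[s] p, ∀ t ∈ univ,
      HasDerivAt (fun t : 𝕜 ↦ f (q + t • v)) (f' (q + t • v)) t :=
    eventually_mem_nhdsWithin.mono fun q hq t _ ↦ hasDerivAt_of_hasLineDerivAt_add_smul (h q hq t)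
  have line_tendsto (t : 𝕜) (_ : t ∈ univ) :
      Tendsto (fun q ↦ f (q + t • v)) (𝓝[s] p) (𝓝 (f (p + t • v))) :=
    Continuous.continuousWithinAt (by fun_prop)
  simpa [HasLineDerivAt] using hasDerivAt_of_tendstoLocallyUniformlyOn isOpen_univ
    derivOnLine_tendsto hasDerivAt_line line_tendsto (mem_univ 0)

section RCLike

variable {𝕜 E F : Type*} [RCLike 𝕜] [NormedAddCommGroup E] [NormedSpace 𝕜 E]
  [NormedAddCommGroup F] [NormedSpace 𝕜 F]

lemma hasFDerivAt_of_hasLineDerivAt_basis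
    (b : Module.Basis (Fin 2) 𝕜 E) {f : E → F} {f' : E → E →L[𝕜] F} {x : E}
    (h : ∀ i, ∀ᶠ y in 𝓝 x, HasLineDerivAt 𝕜 f (f' y (b i)) y (b i)) (hf' : ContinuousAt f' x) :
    HasFDerivAt f (f' x) x := by
  obtain ⟨e, he⟩ : ∃ e : (𝕜 × 𝕜) ≃L[𝕜] E, ∀ w, e w = w.1 • b 0 + w.2 • b 1 :=
    ⟨(ContinuousLinearEquiv.finTwoArrow 𝕜 𝕜).symm.trans b.equivFunL.symm, fun w ↦
      (b.equivFun_symm_apply ![w.1, w.2]).trans (by simp)⟩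
  obtain ⟨u, rfl⟩ := e.surjective x
  have he_tendsto : Tendsto e (𝓝 u) (𝓝 (e u)) := e.continuous.continuousAt
  have partial₀ : ∀ᶠ w in 𝓝 u, HasFDerivAt (fun r ↦ f (e (r, w.2)))
      (toSpanSingleton 𝕜 (f' (e w) (b 0))) w.1 := by
    filter_upwards [he_tendsto.eventually (h 0)] with w hw
    rw [he, add_comm] at hw
    simpa only [he, add_comm] using (hasDerivAt_of_hasLineDerivAt_add_smul hw).hasFDerivAt
  have partial₁ : ∀ᶠ w in 𝓝 u, HasFDerivAt (fun t ↦ f (e (w.1, t)))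
      (toSpanSingleton 𝕜 (f' (e w) (b 1))) w.2 := by
    filter_upwards [he_tendsto.eventually (h 1)] with w hw
    rw [he] at hw
    simpa only [he] using (hasDerivAt_of_hasLineDerivAt_add_smul hw).hasFDerivAt
  have partial_continuousAt (i : Fin 2) :
      ContinuousAt (fun w ↦ toSpanSingleton 𝕜 (f' (e w) (b i))) u :=
    toSpanSingletonCLE.continuous.continuousAt.comp
      ((hf'.comp he_tendsto).clm_apply continuousAt_const)
  have hfe := hasStrictFDerivAt_uncurry_coprod (f := fun r t ↦ f (e (r, t)))
    (f₁ := fun r t ↦ toSpanSingleton 𝕜 (f' (e (r, t)) (b 0)))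
    (f₂ := fun r t ↦ toSpanSingleton 𝕜 (f' (e (r, t)) (b 1)))
    partial₀ partial₁ (partial_continuousAt 0) (partial_continuousAt 1)
  refine e.comp_right_hasFDerivAt_iff.1 (hfe.hasFDerivAt.congr_fderiv ?_)
  ext <;> simp [Function.HasUncurry.uncurry, he]

theorem hasFDerivAt_of_dense_linesMissing
    (b : Module.Basis (Fin 2) 𝕜 E) {L : Set E} (hL : ∀ i, Dense (linesMissing 𝕜 L (b i)))
    {f : E → F} {f' : E → E →L[𝕜] F} (hf : Continuous f) (hf' : Continuous f')
    (h : ∀ x ∈ Lᶜ, HasFDerivAt f (f' x) x) (x : E) : HasFDerivAt f (f' x) x := by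
  have hline (i : Fin 2) (y : E) : HasLineDerivAt 𝕜 f (f' y (b i)) y (b i) :=
    hasLineDerivAt_of_dense (hL i) hf (hf'.clm_apply continuous_const)
      (fun p hp t ↦ (h _ (hp t)).hasLineDerivAt (b i)) y
  exact hasFDerivAt_of_hasLineDerivAt_basis b (fun i ↦ .of_forall (hline i)) hf'.continuousAt

end RCLike

section Complex

variable {F : Type*} [NormedAddCommGroup F] [NormedSpace ℂ F]

theorem hasDerivAt_of_dense_linesMissing
    (b : Module.Basis (Fin 2) ℝ ℂ) {L : Set ℂ} (hL : ∀ i, Dense (linesMissing ℝ L (b i)))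
    {f f' : ℂ → F} (hf : Continuous f) (hf' : Continuous f')
    (h : ∀ z ∈ Lᶜ, HasDerivAt f (f' z) z) (z : ℂ) : HasDerivAt f (f' z) z := by
  have hf'_real : Continuous fun z ↦ (toSpanSingleton ℂ (f' z)).restrictScalars ℝ :=
    (continuous_restrictScalars ℝ).comp (toSpanSingletonCLE.continuous.comp hf')
  have hreal := hasFDerivAt_of_dense_linesMissing b hL hf hf'_real
    (fun w hw ↦ (h w hw).hasFDerivAt.restrictScalars ℝ) z
  exact hasFDerivAt_of_restrictScalars ℝ hreal rfl

theorem a1_zero_of_null_and_lines_miss_general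
    {L : Set ℂ} (hL : IsClosed L) (b : Module.Basis (Fin 2) ℝ ℂ)
    (hb : ∀ i, Dense (linesMissing ℝ L (b i))) {f : ℂ → F} (hf : DifferentiableOn ℂ f Lᶜ)
    (hf₀ : ∃ g, ContinuousOn g (closure Lᶜ) ∧ EqOn g f Lᶜ)
    (hf₁ : ∃ g, ContinuousOn g (closure Lᶜ) ∧ EqOn g (deriv f) Lᶜ)
    (hlim : ∃ c, Tendsto f (cocompact ℂ ⊓ 𝓟 Lᶜ) (𝓝 c)) : ∃ c, ∀ z ∈ Lᶜ, f z = c := by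
  obtain ⟨g, hg, hgf⟩ := hf₀
  obtain ⟨g', hg', hgf'⟩ := hf₁
  obtain ⟨c, hc⟩ := hlim
  have hdense : Dense Lᶜ := (hb 0).mono (linesMissing_subset_compl L (b 0))
  rw [hdense.closure_eq, continuousOn_univ] at hg hg'
  have hderiv : ∀ z ∈ Lᶜ, HasDerivAt g (g' z) z := fun z hz ↦ by
    have hnhds := hL.isOpen_compl.mem_nhds hz
    rw [hgf' hz]
    exact (hf.differentiableAt hnhds).hasDerivAt.congr_of_eventuallyEq
      (hgf.eventuallyEq_of_mem hnhds)
  have hentire : Differentiable ℂ g := fun z ↦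
    (hasDerivAt_of_dense_linesMissing b hb hg hg' hderiv z).differentiableAt
  have hglim : Tendsto g (cocompact ℂ) (𝓝 c) := tendsto_cocompact_of_dense hdense hg <|
    hc.congr' (hgf.symm.eventuallyEq_of_mem (mem_inf_of_right (mem_principal_self _)))
  exact ⟨c, fun z hz ↦ (hgf hz).symm.trans (hentire.apply_eq_of_tendsto_cocompact z hglim)⟩

end Complex

/-- Let `L ⊆ ℂ` be a compact set of zero two-dimensional Lebesgue measure such that
almost every horizontal line and almost every vertical line misses `L`. Then every
function `f` holomorphic on `ℂ \ L`, such that `f` and `f'` extend continuously to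
the closure of `ℂ \ L` in `ℂ` and `f` has a finite limit at infinity, is constant;
that is, `a₁(L) = 0`. -/
theorem a1_zero_of_null_and_lines_miss
    (L : Set ℂ) (hL : IsCompact L) (hvol : volume L = 0)
    (hH : ∀ᵐ a : ℝ, ∀ z ∈ L, z.im ≠ a)
    (hV : ∀ᵐ b : ℝ, ∀ z ∈ L, z.re ≠ b) :
    ∀ f : ℂ → ℂ, DifferentiableOn ℂ f Lᶜ →
      (∃ g : ℂ → ℂ, ContinuousOn g (closure Lᶜ) ∧ Set.EqOn g f Lᶜ) →
      (∃ g : ℂ → ℂ, ContinuousOn g (closure Lᶜ) ∧ Set.EqOn g (deriv f) Lᶜ) →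
      (∃ c : ℂ, Tendsto f (cocompact ℂ) (nhds c)) →
      ∃ c : ℂ, ∀ z ∈ Lᶜ, f z = c := by
  intro f hf hf₀ hf₁ ⟨c, hc⟩
  exact a1_zero_of_null_and_lines_miss_general hL.isClosed Complex.basisOneI
    (dense_linesMissing_basisOneI (Measure.dense_of_ae hH) (Measure.dense_of_ae hV))
    hf hf₀ hf₁ ⟨c, hc.mono_left inf_le_left⟩
end

section
/- Let L ⊆ ℂ be a closed set without isolated points, let z0 ∈ L, let r > 0 and let 0 < M < ∞. Then the set of functions f ∈ C(L) for which there exists a holomorphic function F : D(z0, r) → ℂ with |F(z)| ≤ M for all z ∈ D(z0, r) and F(z) = f(z) for all z ∈ D(z0, r) ∩ L, is a closed subset of C(L) and has empty interior in C(L). -/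
open Set Metric

/-!
Closedness is Montel's theorem. By the Schwarz lemma, the holomorphic functions on `U` bounded by
`M` are equicontinuous, so that among them pointwise convergence is locally uniform and preserves
holomorphy. By Tychonoff's theorem they form a compact space for pointwise convergence, and the
extendable functions are the projection along this space of the closed set of pairs `(f, F)` with
`F = f` on `U ∩ L`.

For the interior, the functions on `L` agreeing near `z₀` with a function differentiable at `z₀`
along `L` form a linear subspace. It is proper, since it does not contain `z ↦ √‖z - z₀‖`, and a
proper subspace of a topological vector space has empty interior.
-/

open Filter Topology

section LocallyUniformLimits

variable {ι V E : Type*} [NormedAddCommGroup V] [NormedSpace ℂ V]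
  [NormedAddCommGroup E] [NormedSpace ℂ E]

theorem equicontinuousOn_of_differentiableOn_of_norm_le {Φ : ι → V → E} {U : Set V} {M : ℝ}
    (hU : IsOpen U) (hd : ∀ i, DifferentiableOn ℂ (Φ i) U) (hb : ∀ i, ∀ z ∈ U, ‖Φ i z‖ ≤ M) :
    EquicontinuousOn Φ U := by
  intro x hx
  obtain ⟨R, hR, hRU⟩ := Metric.isOpen_iff.1 hU x hx
  refine (equicontinuousAt_of_continuity_modulus (fun w ↦ (M + M) / R * dist w x) ?_ Φ ?_
    ).equicontinuousWithinAt U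
  · exact (by fun_prop : Continuous fun w ↦ (M + M) / R * dist w x).tendsto' x 0 (by simp)
  · filter_upwards [ball_mem_nhds x hR] with w hw i
    have maps_ball : MapsTo (Φ i) (ball x R) (closedBall (Φ i x) (M + M)) := fun v hv ↦
      mem_closedBall.2 <| (dist_le_norm_add_norm _ _).trans
        (add_le_add (hb i v (hRU hv)) (hb i x hx))
    rw [dist_comm]
    exact Complex.dist_le_div_mul_dist_of_mapsTo_ball ((hd i).mono hRU) maps_ball hw

theorem tendstoLocallyUniformlyOn_of_equicontinuousOn {X α : Type*} [TopologicalSpace X]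
    [LocallyCompactSpace X] [UniformSpace α] {Φ : ι → X → α} {F : X → α} {l : Filter ι} {U : Set X}
    (hU : IsOpen U) (hΦ : EquicontinuousOn Φ U) (hF : ∀ x ∈ U, Tendsto (Φ · x) l (𝓝 (F x))) :
    TendstoLocallyUniformlyOn Φ F l U := by
  rw [tendstoLocallyUniformlyOn_iff_forall_isCompact hU]
  intro K hKU hK
  have : CompactSpace K := isCompact_iff_compactSpace.1 hK
  have equicontinuous_restrict : Equicontinuous (K.domRestrict ∘ Φ) :=
    (equicontinuous_restrict_iff Φ).2 (hΦ.mono hKU)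
  rw [tendstoUniformlyOn_iff_tendstoUniformly_comp_coe]
  exact UniformFun.tendsto_iff_tendstoUniformly.1 <|
    (equicontinuous_restrict.tendsto_uniformFun_iff_pi l (K.domRestrict F)).2 <|
      tendsto_pi_nhds.2 fun x ↦ hF x (hKU x.2)

end LocallyUniformLimits

section BoundedHolomorphic

variable {E : Type*} [NormedAddCommGroup E] [NormedSpace ℂ E] {L U : Set ℂ} {M : ℝ}

variable (E U M) in
/-- The functions holomorphic on `U` and bounded there by `M`, as a subset of `ℂ → E` with the
topology of pointwise convergence. Their values outside `U` are arbitrary. -/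
def boundedHolomorphic : Set (ℂ → E) :=
  {F | DifferentiableOn ℂ F U ∧ ∀ z ∈ U, ‖F z‖ ≤ M}

theorem isClosed_boundedHolomorphic [CompleteSpace E] (hU : IsOpen U) :
    IsClosed (boundedHolomorphic E U M) := by
  refine isClosed_of_closure_subset fun F hF ↦ ?_
  let Φ : boundedHolomorphic E U M → ℂ → E := (↑)
  let l : Filter (boundedHolomorphic E U M) := comap Φ (𝓝 F)
  have : l.NeBot := mem_closure_iff_comap_neBot.1 hF
  have tendsto_eval (z : ℂ) : Tendsto (Φ · z) l (𝓝 (F z)) := tendsto_pi_nhds.1 tendsto_comap z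
  have locally_uniform : TendstoLocallyUniformlyOn Φ F l U :=
    tendstoLocallyUniformlyOn_of_equicontinuousOn hU
      (equicontinuousOn_of_differentiableOn_of_norm_le hU (fun G ↦ G.2.1) fun G ↦ G.2.2)
      fun z _ ↦ tendsto_eval z
  exact ⟨locally_uniform.differentiableOn (.of_forall fun G ↦ G.2.1) hU, fun z hz ↦
    le_of_tendsto (tendsto_eval z).norm (.of_forall fun G ↦ G.2.2 z hz)⟩

theorem isCompact_boundedHolomorphic_inter_eq_zero [ProperSpace E] (hU : IsOpen U) :
    IsCompact (boundedHolomorphic E U M ∩ {F | ∀ z ∉ U, F z = 0}) := by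
  have isClosed_eq_zero : IsClosed {F : ℂ → E | ∀ z ∉ U, F z = 0} := by
    simp only [ofPred_forall]
    exact isClosed_biInter fun z _ ↦ isClosed_eq (continuous_apply z) continuous_const
  refine (isCompact_univ_pi fun z ↦ isCompact_closedBall (0 : E) (U.indicator (fun _ ↦ M) z)
    ).of_isClosed_subset ((isClosed_boundedHolomorphic hU).inter isClosed_eq_zero) ?_
  rintro F ⟨⟨-, hb⟩, h0⟩ z -
  by_cases hz : z ∈ U
  · simpa [hz] using hb z hz
  · simp [hz, h0 z hz]

variable (E L U M) in
/-- The continuous functions on `L` whose restriction to `U ∩ L` extends to a holomorphic function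
on `U` bounded by `M`. -/
def boundedExtendable : Set C(L, E) :=
  {f | ∃ F : ℂ → E, DifferentiableOn ℂ F U ∧ (∀ z ∈ U, ‖F z‖ ≤ M) ∧
    ∀ z : L, (z : ℂ) ∈ U → F z = f z}

theorem isClosed_boundedExtendable [ProperSpace E] (hU : IsOpen U) :
    IsClosed (boundedExtendable E L U M) := by
  let K : Set (ℂ → E) := boundedHolomorphic E U M ∩ {F | ∀ z ∉ U, F z = 0}
  have : CompactSpace K :=
    isCompact_iff_compactSpace.1 (isCompact_boundedHolomorphic_inter_eq_zero hU)
  let extensionPairs : Set (C(L, E) × K) := {p | ∀ z : L, (z : ℂ) ∈ U → p.2.1 z = p.1 z}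
  have isClosed_pairs : IsClosed extensionPairs := by
    simp only [extensionPairs, ofPred_forall]
    exact isClosed_biInter fun z _ ↦ isClosed_eq
      ((continuous_apply (z : ℂ)).comp (continuous_subtype_val.comp continuous_snd))
      ((continuous_eval_const z).comp continuous_fst)
  suffices boundedExtendable E L U M = Prod.fst '' extensionPairs from
    this ▸ isClosedMap_fst_of_compactSpace _ isClosed_pairs
  ext f
  constructor
  · rintro ⟨F, hd, hb, hf⟩
    have indicator_mem : U.indicator F ∈ K :=
      ⟨⟨hd.congr fun _ hz ↦ indicator_of_mem hz F, fun z hz ↦ by simpa [hz] using hb z hz⟩,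
        fun z hz ↦ indicator_of_notMem hz F⟩
    exact ⟨(f, ⟨U.indicator F, indicator_mem⟩),
      fun z hz ↦ (indicator_of_mem hz F).trans (hf z hz), rfl⟩
  · rintro ⟨⟨f, F, ⟨hd, hb⟩, _⟩, hf, rfl⟩
    exact ⟨F, hd, hb, hf⟩

end BoundedHolomorphic

section DifferentiablyExtendable

variable {𝕜 V E : Type*} [NontriviallyNormedField 𝕜] [NormedAddCommGroup V] [NormedSpace 𝕜 V]
  [NormedAddCommGroup E] [NormedSpace 𝕜 E] {L : Set V} {z₀ : V}

theorem not_differentiableWithinAt_sqrt_norm_sub_smul [NormedSpace ℝ E] {e : E} (he : e ≠ 0)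
    (hz₀ : AccPt z₀ (𝓟 L)) : ¬ DifferentiableWithinAt 𝕜 (fun z ↦ √‖z - z₀‖ • e) L z₀ := by
  intro hd
  obtain ⟨C, hC⟩ := hd.isBigO_sub.bound
  have eventually_small : ∀ᶠ z in 𝓝 z₀, C * √‖z - z₀‖ < ‖e‖ :=
    (by fun_prop : ContinuousAt (fun z ↦ C * √‖z - z₀‖) z₀).eventually_lt continuousAt_const
      (by simpa using he)
  obtain ⟨z, ⟨hne, hzL⟩, hbound, hsmall⟩ := ((accPt_iff_frequently.1 hz₀).and_eventually
    ((eventually_nhdsWithin_iff.1 hC).and eventually_small)).exists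
  have sqrt_pos : 0 < √‖z - z₀‖ := Real.sqrt_pos.2 (norm_pos_iff.2 (sub_ne_zero.2 hne))
  have : √‖z - z₀‖ * ‖e‖ ≤ √‖z - z₀‖ * (C * √‖z - z₀‖) := calc
    √‖z - z₀‖ * ‖e‖ ≤ C * ‖z - z₀‖ := by
      simpa [norm_smul, abs_of_pos sqrt_pos] using hbound hzL
    _ = C * (√‖z - z₀‖ * √‖z - z₀‖) := by rw [Real.mul_self_sqrt (norm_nonneg _)]
    _ = √‖z - z₀‖ * (C * √‖z - z₀‖) := by ring
  exact hsmall.not_ge (le_of_mul_le_mul_left this sqrt_pos)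

variable (𝕜 E L z₀) in
/-- The continuous functions on `L` that agree, near `z₀`, with a function differentiable at `z₀`
along `L`. The point `z₀` need not lie in `L`. -/
def differentiablyExtendable : Submodule 𝕜 C(L, E) where
  carrier := {f | ∃ F : V → E, DifferentiableWithinAt 𝕜 F L z₀ ∧
    ∀ᶠ z in 𝓝 z₀, ∀ hz : z ∈ L, F z = f ⟨z, hz⟩}
  zero_mem' := ⟨0, differentiableWithinAt_const 0, .of_forall fun _ _ ↦ rfl⟩
  add_mem' := by
    rintro f g ⟨F, hF, hFf⟩ ⟨G, hG, hGg⟩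
    refine ⟨F + G, hF.add hG, ?_⟩
    filter_upwards [hFf, hGg] with z hf hg hz
    simp [hf hz, hg hz]
  smul_mem' := by
    rintro c f ⟨F, hF, hFf⟩
    refine ⟨c • F, hF.const_smul c, ?_⟩
    filter_upwards [hFf] with z hf hz
    simp [hf hz]

theorem differentiablyExtendable_ne_top [NormedSpace ℝ E] [Nontrivial E]
    (hz₀ : AccPt z₀ (𝓟 L)) : differentiablyExtendable 𝕜 E L z₀ ≠ ⊤ := by
  obtain ⟨e, he⟩ := exists_ne (0 : E)
  let sqrtDist (z : V) : E := √‖z - z₀‖ • e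
  have continuous_sqrtDist : Continuous sqrtDist := by fun_prop
  intro htop
  obtain ⟨F, hFd, hF⟩ : (⟨fun z ↦ sqrtDist z, by fun_prop⟩ : C(L, E)) ∈
    differentiablyExtendable 𝕜 E L z₀ := htop ▸ Submodule.mem_top
  have eventuallyEq : F =ᶠ[𝓝[L] z₀] sqrtDist := eventually_nhdsWithin_iff.2 hF
  have : (𝓝[L \ {z₀}] z₀).NeBot := accPt_principal_iff_nhdsWithin.1 hz₀
  have le_nhdsWithin : 𝓝[L \ {z₀}] z₀ ≤ 𝓝[L] z₀ := nhdsWithin_mono _ sdiff_subset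
  have eq_at : F z₀ = sqrtDist z₀ := tendsto_nhds_unique_of_eventuallyEq
    (hFd.continuousWithinAt.mono_left le_nhdsWithin)
    continuous_sqrtDist.continuousWithinAt (le_nhdsWithin eventuallyEq)
  exact not_differentiableWithinAt_sqrt_norm_sub_smul (𝕜 := 𝕜) he hz₀
    (hFd.congr_of_eventuallyEq eventuallyEq.symm eq_at.symm)

theorem interior_differentiablyExtendable_eq_empty [NormedSpace ℝ E] [Nontrivial E]
    (hz₀ : AccPt z₀ (𝓟 L)) :
    interior (differentiablyExtendable 𝕜 E L z₀ : Set C(L, E)) = ∅ :=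
  not_nonempty_iff_eq_empty.1 fun h ↦
    differentiablyExtendable_ne_top hz₀ (Submodule.eq_top_of_nonempty_interior' _ h)

end DifferentiablyExtendable

section BoundedExtendable

variable {E : Type*} [NormedAddCommGroup E] [NormedSpace ℂ E] {L U : Set ℂ} {z₀ : ℂ}

theorem boundedExtendable_subset_differentiablyExtendable {M : ℝ} (hU : U ∈ 𝓝 z₀) :
    boundedExtendable E L U M ⊆ differentiablyExtendable ℂ E L z₀ := by
  rintro f ⟨F, hd, -, hf⟩
  refine ⟨F, (hd.differentiableAt hU).differentiableWithinAt, ?_⟩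
  filter_upwards [hU] with z hzU hzL using hf ⟨z, hzL⟩ hzU

theorem boundedExtendable_isClosed_and_interior_empty_general [ProperSpace E] [Nontrivial E]
    (hU : IsOpen U) (hz₀U : z₀ ∈ U) (hz₀L : AccPt z₀ (𝓟 L)) (M : ℝ) :
    IsClosed (boundedExtendable E L U M) ∧ interior (boundedExtendable E L U M) = ∅ :=
  ⟨isClosed_boundedExtendable hU, subset_eq_empty
    (interior_mono (boundedExtendable_subset_differentiablyExtendable (hU.mem_nhds hz₀U)))
    (interior_differentiablyExtendable_eq_empty hz₀L)⟩

end BoundedExtendable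

/-- Let `L ⊆ ℂ` be closed without isolated points, `z0 ∈ L`, `r > 0`, `0 < M < ∞`.
The set of `f ∈ C(L)` (with the topology of uniform convergence on compact subsets
of `L`, i.e. the compact-open topology) admitting a holomorphic function
`F : D(z0, r) → ℂ` bounded by `M` with `F = f` on `D(z0, r) ∩ L` is closed and has
empty interior in `C(L)`. -/
theorem boundedExtendable_isClosed_and_interior_empty
    (L : Set ℂ) (hLclosed : IsClosed L)
    (hno_iso : ∀ z ∈ L, z ∈ closure (L \ {z}))
    (z0 : ℂ) (hz0 : z0 ∈ L) (r : ℝ) (hr : 0 < r) (M : ℝ) (hM : 0 < M) :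
    IsClosed {f : C(L, ℂ) | ∃ F : ℂ → ℂ,
        DifferentiableOn ℂ F (ball z0 r) ∧
        (∀ z ∈ ball z0 r, ‖F z‖ ≤ M) ∧
        ∀ z : L, (z : ℂ) ∈ ball z0 r → F (z : ℂ) = f z} ∧
    interior {f : C(L, ℂ) | ∃ F : ℂ → ℂ,
        DifferentiableOn ℂ F (ball z0 r) ∧
        (∀ z ∈ ball z0 r, ‖F z‖ ≤ M) ∧
        ∀ z : L, (z : ℂ) ∈ ball z0 r → F (z : ℂ) = f z} = ∅ :=
  boundedExtendable_isClosed_and_interior_empty_general isOpen_ball (mem_ball_self hr)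
    (accPt_principal_iff_nhdsWithin.2 (mem_closure_iff_nhdsWithin_neBot.1 (hno_iso z0 hz0))) M
end

section
/- Let L ⊆ ℂ be a closed set without isolated points and let z0 ∈ L. Then the class of functions f ∈ C(L) which are non-holomorphically extendable at z0 — that is, for which there exists no pair of an open disc D(z0, r) with r > 0 and a holomorphic function F : D(z0, r) → ℂ such that F = f on D(z0, r) ∩ L — is a dense and Gδ subset of C(L). -/
open Set Metric

/-! By Cauchy's estimates, `f` extends holomorphically at `z₀` iff for some `M` it is given on
`D(z₀, 1 / (2M))` by a power series `∑ (z - z₀) ^ k • a k` with `‖a k‖ ≤ M ^ (k + 1)`. For fixed `M`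
such sequences `a` form a compact product of balls on which the sum depends continuously, so the
functions `f` obtained in this way form a closed set; hence the extendable functions are an `Fσ`.
They also form a linear subspace, which is proper because `√‖z - z₀‖` is not extendable, and the
complement of a proper subspace is dense. -/

open Filter Topology

section CompactFamily

variable {A X Y : Type*} [TopologicalSpace A] [TopologicalSpace X] [TopologicalSpace Y] [T2Space Y]

lemma isClosed_setOf_exists_mem_eqOn {K : Set A} (hK : IsCompact K) {Φ : A → X → Y} {s : Set X}
    (hΦ : ∀ x ∈ s, ContinuousOn (Φ · x) K) :
    IsClosed {f : C(X, Y) | ∃ a ∈ K, EqOn f (Φ a) s} := by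
  have : CompactSpace K := isCompact_iff_compactSpace.mp hK
  let graph : Set (K × C(X, Y)) := ⋂ x ∈ s, {p | p.2 x = Φ p.1 x}
  have graph_closed : IsClosed graph := isClosed_biInter fun x hx =>
    isClosed_eq ((continuous_eval_const x).comp continuous_snd)
      ((hΦ x hx).domRestrict.comp continuous_fst)
  convert isClosedMap_snd_of_compactSpace graph graph_closed using 1
  ext f
  simp [graph, EqOn]

end CompactFamily

section PowerSeries

variable {E : Type*} [NormedAddCommGroup E] [NormedSpace ℂ E]

/-- The sequences of power series coefficients that are bounded by `u` termwise. -/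
def boundedCoeffs (E : Type*) [NormedAddCommGroup E] (u : ℕ → ℝ) : Set (ℕ → E) :=
  {a | ∀ k, ‖a k‖ ≤ u k}

lemma isCompact_boundedCoeffs (E : Type*) [NormedAddCommGroup E] [ProperSpace E] (u : ℕ → ℝ) :
    IsCompact (boundedCoeffs E u) := by
  convert isCompact_univ_pi fun k => isCompact_closedBall (0 : E) (u k)
  ext a
  simp [boundedCoeffs]

variable {u : ℕ → ℝ} {r : ℝ}

lemma norm_pow_smul_le_of_mem_boundedCoeffs {a : ℕ → E} (ha : a ∈ boundedCoeffs E u) {w : ℂ}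
    (hw : ‖w‖ ≤ r) (k : ℕ) : ‖w ^ k • a k‖ ≤ u k * r ^ k := by
  have hk := ha k
  have : 0 ≤ u k := (norm_nonneg _).trans hk
  rw [norm_smul, norm_pow, mul_comm]
  gcongr

lemma continuousOn_tsum_pow_smul_boundedCoeffs [CompleteSpace E]
    (hu : Summable fun k => u k * r ^ k) {w : ℂ} (hw : ‖w‖ ≤ r) :
    ContinuousOn (fun a : ℕ → E => ∑' k, w ^ k • a k) (boundedCoeffs E u) :=
  continuousOn_tsum (fun k => by fun_prop) hu fun k _ ha =>
    norm_pow_smul_le_of_mem_boundedCoeffs ha hw k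

lemma differentiableOn_tsum_pow_smul [CompleteSpace E] (hu : Summable fun k => u k * r ^ k)
    {a : ℕ → E} (ha : a ∈ boundedCoeffs E u) (z₀ : ℂ) :
    DifferentiableOn ℂ (fun z => ∑' k, (z - z₀) ^ k • a k) (ball z₀ r) :=
  Complex.differentiableOn_tsum_of_summable_norm hu (fun k => by fun_prop) isOpen_ball
    fun k _ hz => norm_pow_smul_le_of_mem_boundedCoeffs ha (mem_ball_iff_norm.mp hz).le k

lemma exists_boundedCoeffs_hasSum_of_analyticAt {F : ℂ → E} {z₀ : ℂ} (hF : AnalyticAt ℂ F z₀) :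
    ∃ a : ℕ → E, (∀ᶠ M : ℝ in atTop, a ∈ boundedCoeffs E fun k => M ^ (k + 1)) ∧
      ∀ᶠ z in 𝓝 z₀, HasSum (fun k => (z - z₀) ^ k • a k) (F z) := by
  obtain ⟨p, hp⟩ := hF
  obtain ⟨C, R, hC, hR, hCR⟩ := p.le_mul_pow_of_radius_pos hp.radius_pos
  refine ⟨p.coeff, ?_, hasFPowerSeriesAt_iff'.mp hp⟩
  filter_upwards [eventually_ge_atTop C, eventually_ge_atTop R] with M hCM hRM k
  calc ‖p.coeff k‖ = ‖p k‖ := p.norm_apply_eq_norm_coef.symm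
    _ ≤ C * R ^ k := hCR k
    _ ≤ M * M ^ k := by gcongr; exact hC.le.trans hCM
    _ = M ^ (k + 1) := (pow_succ' M k).symm

end PowerSeries

section NormSqrt

variable {𝕜 V E : Type*} [NontriviallyNormedField 𝕜] [NormedAddCommGroup V] [NormedSpace 𝕜 V]
  [NormedAddCommGroup E] [NormedSpace 𝕜 E]

lemma isLittleO_sub_sqrt_norm_sub (x : V) :
    (fun y => y - x) =o[𝓝 x] fun y => √‖y - x‖ := by
  have h_tendsto : Tendsto (fun y => √‖y - x‖) (𝓝 x) (𝓝 0) := by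
    refine Continuous.tendsto' (by fun_prop) _ _ (by simp)
  have h := ((Asymptotics.isLittleO_one_iff ℝ).mpr h_tendsto).mul_isBigO
    (Asymptotics.isBigO_refl (fun y => √‖y - x‖) (𝓝 x))
  simpa only [Real.mul_self_sqrt (norm_nonneg _), one_mul, Asymptotics.isLittleO_norm_left] using h

lemma not_differentiableAt_of_norm_eq_sqrt {F : V → E} {x : V} {s : Set V} (hx : AccPt x (𝓟 s))
    (hF : ∀ᶠ y in 𝓝 x, y ∈ s → ‖F y‖ = √‖y - x‖) : ¬ DifferentiableAt 𝕜 F x := by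
  intro hd
  have : NeBot (𝓝[≠] x ⊓ 𝓟 s) := hx
  have hle : 𝓝[≠] x ⊓ 𝓟 s ≤ 𝓝 x := inf_le_left.trans nhdsWithin_le_nhds
  have norm_eq : ∀ᶠ y in 𝓝[≠] x ⊓ 𝓟 s, ‖F y‖ = √‖y - x‖ := by
    filter_upwards [hle hF, mem_inf_of_right (mem_principal_self s)] with y hy hys using hy hys
  have sub_isLittleO : (fun y => y - x) =o[𝓝[≠] x ⊓ 𝓟 s] F :=
    ((isLittleO_sub_sqrt_norm_sub x).mono hle).trans_eventuallyEq
      (norm_eq.mono fun _ h => h.symm) |>.of_norm_right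
  have F_zero : F x = 0 := by
    refine norm_eq_zero.mp <| tendsto_nhds_unique (hd.continuousAt.norm.mono_left hle) ?_
    refine Tendsto.congr' (norm_eq.mono fun _ h => h.symm) (Tendsto.mono_left ?_ hle)
    exact Continuous.tendsto' (by fun_prop) _ _ (by simp)
  have F_isBigO : F =O[𝓝[≠] x ⊓ 𝓟 s] fun y => y - x := by
    simpa only [F_zero, sub_zero] using hd.isBigO_sub.mono hle
  refine Asymptotics.isLittleO_irrefl (Eventually.frequently ?_)
    (sub_isLittleO.trans_isBigO F_isBigO)
  filter_upwards [mem_inf_of_left self_mem_nhdsWithin] with y hy using sub_ne_zero.mpr hy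

end NormSqrt

section HolExtendable

variable {E : Type*} [NormedAddCommGroup E] [NormedSpace ℂ E] {L : Set ℂ} {z₀ : ℂ}

/-- `f` agrees on `L`, near `z₀`, with a holomorphic function. Here `z₀` need not lie in `L`. -/
def HolExtendableAt (f : C(L, E)) (z₀ : ℂ) : Prop :=
  ∃ r : ℝ, 0 < r ∧ ∃ F : ℂ → E, DifferentiableOn ℂ F (ball z₀ r) ∧
    ∀ z : L, (z : ℂ) ∈ ball z₀ r → F z = f z

namespace HolExtendableAt

lemma zero : HolExtendableAt (0 : C(L, E)) z₀ :=
  ⟨1, one_pos, 0, differentiableOn_const 0, fun _ _ => rfl⟩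

lemma add {f g : C(L, E)} (hf : HolExtendableAt f z₀) (hg : HolExtendableAt g z₀) :
    HolExtendableAt (f + g) z₀ := by
  obtain ⟨r, hr, F, hF, hFf⟩ := hf
  obtain ⟨s, hs, G, hG, hGg⟩ := hg
  have hball_r : ball z₀ (min r s) ⊆ ball z₀ r := ball_subset_ball (min_le_left r s)
  have hball_s : ball z₀ (min r s) ⊆ ball z₀ s := ball_subset_ball (min_le_right r s)
  exact ⟨min r s, lt_min hr hs, F + G, (hF.mono hball_r).add (hG.mono hball_s), fun z hz =>
    congr_arg₂ (· + ·) (hFf z (hball_r hz)) (hGg z (hball_s hz))⟩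

lemma smul {f : C(L, E)} (c : ℂ) (hf : HolExtendableAt f z₀) : HolExtendableAt (c • f) z₀ := by
  obtain ⟨r, hr, F, hF, hFf⟩ := hf
  exact ⟨r, hr, c • F, hF.const_smul c, fun z hz => congr_arg (c • ·) (hFf z hz)⟩

end HolExtendableAt

/-- The subspace of `C(L, E)` formed by the functions that extend holomorphically at `z₀`. -/
def holExtendableSubmodule (L : Set ℂ) (E : Type*) [NormedAddCommGroup E] [NormedSpace ℂ E]
    (z₀ : ℂ) : Submodule ℂ C(L, E) where
  carrier := {f | HolExtendableAt f z₀}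
  zero_mem' := .zero
  add_mem' := .add
  smul_mem' c _ := .smul c

lemma exists_not_holExtendableAt (E : Type*) [NormedAddCommGroup E] [NormedSpace ℂ E]
    [Nontrivial E] (hz₀ : AccPt z₀ (𝓟 L)) : ∃ f : C(L, E), ¬ HolExtendableAt f z₀ := by
  obtain ⟨e, he⟩ := exists_norm_eq E zero_le_one
  refine ⟨⟨fun z => (√‖(z : ℂ) - z₀‖ : ℂ) • e, by fun_prop⟩, ?_⟩
  rintro ⟨r, hr, F, hF, hFf⟩
  have hball : ball z₀ r ∈ 𝓝 z₀ := ball_mem_nhds z₀ hr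
  refine not_differentiableAt_of_norm_eq_sqrt hz₀ ?_ (hF.differentiableAt hball)
  filter_upwards [hball] with z hz hzL
  simp [hFf ⟨z, hzL⟩ hz, norm_smul, he, abs_of_nonneg]

lemma dense_setOf_not_holExtendableAt [Nontrivial E] (hz₀ : AccPt z₀ (𝓟 L)) :
    Dense {f : C(L, E) | ¬ HolExtendableAt f z₀} := by
  obtain ⟨g, hg⟩ := exists_not_holExtendableAt E hz₀
  change Dense (holExtendableSubmodule L E z₀ : Set C(L, E))ᶜ
  rw [← interior_eq_empty_iff_dense_compl, ← not_nonempty_iff_eq_empty]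
  intro h_interior
  have h_top := (holExtendableSubmodule L E z₀).eq_top_of_nonempty_interior' h_interior
  exact hg (h_top.ge (Submodule.mem_top (x := g)))

/-- The functions on `L` given on `D(z₀, 1 / (2M))` by a power series whose `k`-th coefficient is
at most `M ^ (k + 1)` in norm. Halving the radius `1 / M` makes the series converge uniformly. -/
def powerSeriesExtendable (L : Set ℂ) (E : Type*) [NormedAddCommGroup E] [NormedSpace ℂ E]
    (z₀ : ℂ) (M : ℝ) : Set C(L, E) :=
  {f | ∃ a ∈ boundedCoeffs E fun k => M ^ (k + 1),
    EqOn f (fun z => ∑' k, ((z : ℂ) - z₀) ^ k • a k) {z | (z : ℂ) ∈ ball z₀ (2 * M)⁻¹}}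

lemma summable_pow_succ_mul_inv_two_mul_pow (M : ℝ) :
    Summable fun k : ℕ => M ^ (k + 1) * (2 * M)⁻¹ ^ k := by
  rcases eq_or_ne M 0 with rfl | hM
  · simp
  refine (summable_geometric_two.mul_left M).congr fun k => ?_
  rw [pow_succ', mul_assoc, ← mul_pow, mul_inv_rev, mul_inv_cancel_left₀ hM, one_div]

lemma isClosed_powerSeriesExtendable [ProperSpace E] (L : Set ℂ) (z₀ : ℂ) (M : ℝ) :
    IsClosed (powerSeriesExtendable L E z₀ M) :=
  isClosed_setOf_exists_mem_eqOn (isCompact_boundedCoeffs E _) fun _ hz =>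
    continuousOn_tsum_pow_smul_boundedCoeffs (summable_pow_succ_mul_inv_two_mul_pow M)
      (mem_ball_iff_norm.mp hz).le

lemma holExtendableAt_of_mem_powerSeriesExtendable [CompleteSpace E] {M : ℝ} (hM : 0 < M)
    {f : C(L, E)} (hf : f ∈ powerSeriesExtendable L E z₀ M) : HolExtendableAt f z₀ := by
  obtain ⟨a, ha, hfa⟩ := hf
  exact ⟨(2 * M)⁻¹, by positivity, _,
    differentiableOn_tsum_pow_smul (summable_pow_succ_mul_inv_two_mul_pow M) ha z₀,
    fun z hz => (hfa hz).symm⟩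

lemma HolExtendableAt.eventually_mem_powerSeriesExtendable [CompleteSpace E] {f : C(L, E)}
    (hf : HolExtendableAt f z₀) : ∀ᶠ M in atTop, f ∈ powerSeriesExtendable L E z₀ M := by
  obtain ⟨r, hr, F, hF, hFf⟩ := hf
  have hball : ball z₀ r ∈ 𝓝 z₀ := ball_mem_nhds z₀ hr
  obtain ⟨a, ha, h_sum⟩ := exists_boundedCoeffs_hasSum_of_analyticAt (hF.analyticAt hball)
  obtain ⟨ε, hε, h_ball⟩ := Metric.eventually_nhds_iff_ball.mp (h_sum.and hball)
  have h_radius : Tendsto (fun M : ℝ => (2 * M)⁻¹) atTop (𝓝 0) :=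
    tendsto_inv_atTop_zero.comp (tendsto_id.const_mul_atTop two_pos)
  filter_upwards [ha, h_radius.eventually_le_const hε] with M haM hMε
  refine ⟨a, haM, fun z hz => ?_⟩
  obtain ⟨h_sum_z, hzr⟩ := h_ball z (ball_subset_ball hMε hz)
  exact (hFf z hzr).symm.trans h_sum_z.tsum_eq.symm

lemma setOf_holExtendableAt_eq_iUnion [CompleteSpace E] (L : Set ℂ) (z₀ : ℂ) :
    {f : C(L, E) | HolExtendableAt f z₀} = ⋃ n : ℕ, powerSeriesExtendable L E z₀ (n + 1) := by
  ext f
  rw [mem_iUnion]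
  refine ⟨fun hf => ?_, fun ⟨n, hn⟩ =>
    holExtendableAt_of_mem_powerSeriesExtendable n.cast_add_one_pos hn⟩
  have h_nat : Tendsto (fun n : ℕ => (n + 1 : ℝ)) atTop atTop :=
    tendsto_atTop_add_const_right _ _ tendsto_natCast_atTop_atTop
  exact (h_nat.eventually hf.eventually_mem_powerSeriesExtendable).exists

lemma isGδ_setOf_not_holExtendableAt [ProperSpace E] (L : Set ℂ) (z₀ : ℂ) :
    IsGδ {f : C(L, E) | ¬ HolExtendableAt f z₀} := by
  change IsGδ {f : C(L, E) | HolExtendableAt f z₀}ᶜ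
  rw [setOf_holExtendableAt_eq_iUnion, compl_iUnion]
  exact .iInter_of_isOpen fun n => (isClosed_powerSeriesExtendable L z₀ _).isOpen_compl

theorem nonHolExtendableAt_dense_Gdelta_general [ProperSpace E] [Nontrivial E]
    (hz₀ : AccPt z₀ (𝓟 L)) :
    Dense {f : C(L, E) | ¬ HolExtendableAt f z₀} ∧
      IsGδ {f : C(L, E) | ¬ HolExtendableAt f z₀} :=
  ⟨dense_setOf_not_holExtendableAt hz₀, isGδ_setOf_not_holExtendableAt L z₀⟩

end HolExtendable

/-- Let `L ⊆ ℂ` be closed without isolated points and `z0 ∈ L`. The class of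
functions `f ∈ C(L)` (with the topology of uniform convergence on compact subsets of
`L`, i.e. the compact-open topology) which are non-holomorphically extendable at
`z0` — i.e. there is no `r > 0` and holomorphic `F : D(z0, r) → ℂ` with `F = f` on
`D(z0, r) ∩ L` — is a dense and `Gδ` subset of `C(L)`. -/
theorem nonHolExtendableAt_dense_Gdelta
    (L : Set ℂ) (hLclosed : IsClosed L)
    (hno_iso : ∀ z ∈ L, z ∈ closure (L \ {z}))
    (z0 : ℂ) (hz0 : z0 ∈ L) :
    Dense {f : C(L, ℂ) | ¬ ∃ r : ℝ, 0 < r ∧ ∃ F : ℂ → ℂ,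
        DifferentiableOn ℂ F (ball z0 r) ∧
        ∀ z : L, (z : ℂ) ∈ ball z0 r → F (z : ℂ) = f z} ∧
    IsGδ {f : C(L, ℂ) | ¬ ∃ r : ℝ, 0 < r ∧ ∃ F : ℂ → ℂ,
        DifferentiableOn ℂ F (ball z0 r) ∧
        ∀ z : L, (z : ℂ) ∈ ball z0 r → F (z : ℂ) = f z} := by
  exact nonHolExtendableAt_dense_Gdelta_general <| accPt_principal_iff_clusterPt.mpr <|
    mem_closure_iff_clusterPt.mp (hno_iso z0 hz0)
end

section
/- Let p ∈ {0,1,2,...} ∪ {∞} and let Ω ⊆ ℂ be a bounded domain (a bounded connected open set) whose boundary ∂Ω is the union of the images of finitely many pairwise disjoint Jordan curves. Then the class of nowhere holomorphically extendable functions f ∈ A^p(Ω) — that is, those f for which there exist no point z0 ∈ ∂Ω, radius r > 0 and holomorphic function F : D(z0, r) → ℂ such that F(z) = f(z) for every z ∈ D(z0, r) ∩ ∂Ω — is a dense and Gδ subset of A^p(Ω). -/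
open Set Metric

/-- `f` belongs to `A^p(U)`: `f` is holomorphic on `U` and, for every integer
`j ≤ p`, the derivative `f⁽ʲ⁾` extends continuously to the closure of `U` in `ℂ`. -/
def MemAp (p : ℕ∞) (U : Set ℂ) (f : ℂ → ℂ) : Prop :=
  DifferentiableOn ℂ f U ∧
    ∀ j : ℕ, (j : ℕ∞) ≤ p →
      ∃ g : ℂ → ℂ, ContinuousOn g (closure U) ∧ Set.EqOn g (iteratedDeriv j f) U

/-- The space `A^p(U)` as a type. -/
def ApSpace (p : ℕ∞) (U : Set ℂ) : Type :=
  {f : ℂ → ℂ // MemAp p U f}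

/-- The topology of `A^p(U)` for bounded `U`: uniform convergence on the closure of
`U` of (the continuous extensions of) all derivatives `f⁽ʲ⁾`, `j ≤ p`; by density of
`U` in its closure this is the topology of uniform convergence on `U` of the
derivatives `f⁽ʲ⁾`, `j ≤ p`. -/
noncomputable def apTop (p : ℕ∞) (U : Set ℂ) : TopologicalSpace (ApSpace p U) :=
  TopologicalSpace.induced
    (fun f => fun j : ℕ =>
      UniformFun.ofFun
        (fun z : ↥U => if (j : ℕ∞) ≤ p then iteratedDeriv j f.1 (z : ℂ) else 0))
    inferInstance

/-- `f ∈ A^p(Ω)` is nowhere holomorphically extendable: there are no `z0 ∈ ∂Ω`,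
`r > 0` and holomorphic `F : D(z0, r) → ℂ` with `F = f` on `D(z0, r) ∩ ∂Ω`, where
`f` is identified with its continuous extension `g` to the closure of `Ω`. -/
def NowhereExtAp (Ω : Set ℂ) (f : ℂ → ℂ) : Prop :=
  ¬ ∃ z0 ∈ frontier Ω, ∃ r : ℝ, 0 < r ∧ ∃ F : ℂ → ℂ,
      DifferentiableOn ℂ F (ball z0 r) ∧
      ∃ g : ℂ → ℂ, ContinuousOn g (closure Ω) ∧ Set.EqOn g f Ω ∧
        ∀ z ∈ ball z0 r ∩ frontier Ω, F z = g z

/-!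
If `f` extends holomorphically near a boundary point, then on a small disc centered in a countable
dense subset of `∂Ω` its boundary values are those of a power series whose coefficients satisfy
Cauchy estimates. With the center, the radius and the bound fixed, such functions form a closed
subset of `A^p(Ω)`, since the polydisc of admissible coefficients is compact, and this set has empty
interior, since adding a small multiple of `1 / (z - ζ)`, with `ζ` outside `closure Ω` and inside
the disc, leaves it.
So Baire's theorem applies as soon as every boundary point is a limit of points outside `closure Ω`,
that is, `interior (closure Ω) = Ω`.

For a Jordan boundary this is an argument with continuous logarithms in the style of Eilenberg. A
zero-free function on `∂Ω` is a power of `z - a`, where `a ∈ Ω`, times a zero-free function on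
`closure Ω`: extend it to the plane, perturb the extension to have no zeros on finitely many circles
whose discs contain all its zeros in `Ω`, and repair it disc by disc. If `γ s₀ ∈ ∂Ω` were interior
to `closure Ω`, then `γ s ↦ -s / s₀`, extended by `1` to the other curves, would have a logarithm on
the boundary of `interior (closure Ω)`, where the value `-1` is not taken. Hence the power would be
trivial and the function would have a logarithm on `∂Ω`, giving one of the identity of the circle.
-/

open Filter Topology

/-! ### Continuous logarithms -/

/-- `f` has a continuous logarithm on `s`. -/
def HasLogOn {X : Type*} [TopologicalSpace X] (f : X → ℂ) (s : Set X) : Prop :=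
  ∃ l : X → ℂ, ContinuousOn l s ∧ ∀ z ∈ s, Complex.exp (l z) = f z

theorem HasLogOn.mono {X : Type*} [TopologicalSpace X] {f : X → ℂ} {s t : Set X}
    (hf : HasLogOn f t) (hst : s ⊆ t) : HasLogOn f s :=
  let ⟨l, hl, hlf⟩ := hf
  ⟨l, hl.mono hst, fun z hz => hlf z (hst hz)⟩

theorem HasLogOn.congr {X : Type*} [TopologicalSpace X] {f g : X → ℂ} {s : Set X}
    (hf : HasLogOn f s) (hfg : EqOn g f s) : HasLogOn g s :=
  let ⟨l, hl, hlf⟩ := hf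
  ⟨l, hl, fun z hz => (hlf z hz).trans (hfg hz).symm⟩

theorem hasLogOn_of_mapsTo_slitPlane {X : Type*} [TopologicalSpace X] {f : X → ℂ} {s : Set X}
    (hf : ContinuousOn f s) (hfs : MapsTo f s Complex.slitPlane) : HasLogOn f s :=
  ⟨fun z => Complex.log (f z), hf.clog fun _ hz => hfs hz,
    fun _ hz => Complex.exp_log (Complex.slitPlane_ne_zero (hfs hz))⟩

theorem exists_continuous_exp_eq {X : Type*} [TopologicalSpace X] [SimplyConnectedSpace X]
    [LocallyPathConnectedSpace X] {f : X → ℂ} (hf : Continuous f) (hf₀ : ∀ x, f x ≠ 0) :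
    ∃ l : X → ℂ, Continuous l ∧ ∀ x, Complex.exp (l x) = f x := by
  obtain ⟨x₀⟩ : Nonempty X := inferInstance
  obtain ⟨l, ⟨-, hl⟩, -⟩ := Complex.isCoveringMapOn_exp.existsUnique_continuousMap_lifts
    ⟨f, hf⟩ (a₀ := x₀) (e₀ := Complex.log (f x₀)) (Complex.exp_log (hf₀ x₀)) hf₀
  exact ⟨l, l.continuous, congrFun hl⟩

theorem eq_of_forall_exp_eq {X : Type*} [TopologicalSpace X] [PreconnectedSpace X] {l : X → ℂ}
    (hl : Continuous l) {w : ℂ} (hw : ∀ x, Complex.exp (l x) = w) (x y : X) : l x = l y :=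
  congrFun (Complex.isCoveringMap_exp.eq_of_comp_eq (g₂ := fun _ => l y) hl continuous_const
    (funext fun x => Subtype.ext ((hw x).trans (hw y).symm)) y rfl) x

/-! ### Functions on circles -/

theorem circleMap_sub_center_zpow (c : ℂ) {R : ℝ} (hR : R ≠ 0) (t : ℝ) (k : ℤ) :
    (circleMap c R t - c) ^ k = Complex.exp (k * (Complex.log R + t * Complex.I)) := by
  rw [Complex.exp_int_mul, Complex.exp_add, Complex.exp_log (by exact_mod_cast hR), circleMap,
    add_sub_cancel_left]

theorem exists_circleMap_eq {c z : ℂ} {R : ℝ} (hz : z ∈ sphere c R) :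
    ∃ t : ℝ, circleMap c R t = z := by
  have hR : 0 ≤ R := dist_nonneg.trans_eq hz
  rwa [← abs_of_nonneg hR, ← range_circleMap] at hz

theorem eq_zero_of_hasLogOn_sub_zpow {c : ℂ} {R : ℝ} (hR : 0 < R) {k : ℤ}
    (h : HasLogOn (fun z => (z - c) ^ k) (sphere c R)) : k = 0 := by
  obtain ⟨l, hl, hlz⟩ := h
  have hmem (t : ℝ) : circleMap c R t ∈ sphere c R := circleMap_mem_sphere c hR.le t
  have hlc : Continuous fun t : ℝ => l (circleMap c R t) :=
    hl.comp_continuous (continuous_circleMap c R) hmem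
  have hconst := eq_of_forall_exp_eq (w := 1)
    (l := fun t : ℝ => l (circleMap c R t) - k * (Complex.log R + t * Complex.I))
    (hlc.sub (by fun_prop)) (fun t => by
      rw [Complex.exp_sub, hlz _ (hmem t), ← circleMap_sub_center_zpow c hR.ne', div_self]
      exact zpow_ne_zero _ (sub_ne_zero.2 (circleMap_ne_center hR.ne')))
    (2 * Real.pi) 0
  have hperiod : circleMap c R (2 * Real.pi) = circleMap c R 0 := by
    simpa using periodic_circleMap c R 0
  simpa [hperiod] using hconst

theorem exists_continuousOn_comp_circleMap {Y : Type*} [TopologicalSpace Y] {w : ℝ → Y}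
    (hw : Continuous w) (hper : Function.Periodic w (2 * Real.pi)) (c : ℂ) :
    ∃ u : ℂ → Y, ContinuousOn u {c}ᶜ ∧ ∀ R > 0, ∀ t, u (circleMap c R t) = w t := by
  have hlift : Continuous (hper.lift : Real.Angle → Y) := continuous_coinduced_dom.2 hw
  refine ⟨fun z => hper.lift ((z - c).arg : Real.Angle), fun z hz => ?_, fun R hR t => ?_⟩
  · have harg := Complex.continuousAt_arg_coe_angle (sub_ne_zero.2 hz)
    exact (hlift.continuousAt.comp (harg.comp (f := fun z => z - c)
      (by fun_prop))).continuousWithinAt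
  · have harg : ((circleMap c R t - c).arg : Real.Angle) = t := by
      rw [circleMap, add_sub_cancel_left, Complex.exp_mul_I, ← Complex.ofReal_cos,
        ← Complex.ofReal_sin]
      exact_mod_cast Complex.arg_mul_cos_add_sin_mul_I_coe_angle hR t
    exact (congrArg hper.lift harg).trans (hper.lift_coe t)

theorem exists_eq_sub_zpow_mul_exp_on_sphere {c : ℂ} {R : ℝ} (hR : 0 < R) {f : ℂ → ℂ}
    (hf : ContinuousOn f (sphere c R)) (hf₀ : ∀ z ∈ sphere c R, f z ≠ 0) :
    ∃ (k : ℤ) (u : ℂ → ℂ), ContinuousOn u (sphere c R) ∧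
      ∀ z ∈ sphere c R, f z = (z - c) ^ k * Complex.exp (u z) := by
  have hmem (t : ℝ) : circleMap c R t ∈ sphere c R := circleMap_mem_sphere c hR.le t
  obtain ⟨v, hv, hvf⟩ := exists_continuous_exp_eq (f := fun t : ℝ => f (circleMap c R t))
    (hf.comp_continuous (continuous_circleMap c R) hmem) fun t => hf₀ _ (hmem t)
  have hjump (t : ℝ) : Complex.exp (v (t + 2 * Real.pi) - v t) = 1 := by
    rw [Complex.exp_sub, hvf, hvf, periodic_circleMap c R t, div_self (hf₀ _ (hmem t))]
  obtain ⟨k, hk⟩ := Complex.exp_eq_one_iff.1 (hjump 0)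
  have hper : Function.Periodic
      (fun t : ℝ => v t - k * (Complex.log R + t * Complex.I)) (2 * Real.pi) := fun t => by
    have hjump_eq := eq_of_forall_exp_eq (l := fun t : ℝ => v (t + 2 * Real.pi) - v t)
      (by fun_prop) hjump t 0
    simp only [hk] at hjump_eq
    push_cast
    linear_combination hjump_eq
  obtain ⟨u, hu, hucirc⟩ := exists_continuousOn_comp_circleMap (by fun_prop) hper c
  refine ⟨k, u, hu.mono fun z hz => ne_of_mem_sphere hz hR.ne', fun z hz => ?_⟩
  obtain ⟨t, rfl⟩ := exists_circleMap_eq hz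
  rw [circleMap_sub_center_zpow c hR.ne', hucirc R hR, ← Complex.exp_add, add_sub_cancel, hvf]

/-! ### Perturbing and extending continuous functions -/

theorem exists_continuous_eqOn_of_isClosed.{u, v} {X : Type u} {Y : Type v} [TopologicalSpace X]
    [NormalSpace X] [TopologicalSpace Y] [TietzeExtension.{u, v} Y] {s : Set X} (hs : IsClosed s)
    {f : X → Y} (hf : ContinuousOn f s) : ∃ g : X → Y, Continuous g ∧ EqOn g f s := by
  obtain ⟨g, hg⟩ := ContinuousMap.exists_restrict_eq hs ⟨s.domRestrict f, hf.domRestrict⟩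
  exact ⟨g, g.continuous, fun z hz => DFunLike.congr_fun hg ⟨z, hz⟩⟩

theorem exists_continuous_eqOn_closure_eqOn_compl {X Y : Type*} [TopologicalSpace X]
    [TopologicalSpace Y] {s : Set X} (hs : IsOpen s) {f g : X → Y}
    (hf : ContinuousOn f (closure s)) (hg : ContinuousOn g sᶜ) (hfg : EqOn f g (frontier s)) :
    ∃ F : X → Y, Continuous F ∧ EqOn F f (closure s) ∧ EqOn F g sᶜ := by
  classical
  refine ⟨s.piecewise f g, continuous_piecewise hfg hf (by rwa [hs.isClosed_compl.closure_eq]),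
    fun z hz => ?_, fun z hz => piecewise_eq_of_notMem s f g hz⟩
  by_cases hzs : z ∈ s
  · exact piecewise_eq_of_mem s f g hzs
  · rw [piecewise_eq_of_notMem s f g hzs, hfg ⟨hz, hs.interior_eq.symm ▸ hzs⟩]

theorem dimH_sphere_le_one (c : ℂ) (R : ℝ) : dimH (sphere c R) ≤ 1 := by
  have hsub : sphere c R ⊆ range (circleMap c R) := fun _ hz => exists_circleMap_eq hz
  refine (dimH_mono hsub).trans ?_
  simpa using (contDiff_circleMap c R (n := 1)).dimH_range_le

theorem exists_continuous_dist_lt_forall_ne_zero {E F : Type*} [NormedAddCommGroup E]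
    [NormedSpace ℝ E] [FiniteDimensional ℝ E] [NormedAddCommGroup F] [NormedSpace ℝ F]
    [FiniteDimensional ℝ F] {f : E → F} (hf : Continuous f) {ε : ℝ} (hε : 0 < ε) {s : Set E}
    (hs : dimH s < Module.finrank ℝ F) :
    ∃ g : E → F, Continuous g ∧ (∀ x, dist (g x) (f x) < ε) ∧ ∀ x ∈ s, g x ≠ 0 := by
  obtain ⟨g, hg, hgf, -⟩ := hf.exists_contDiff_approx 1 (ε := fun _ => ε / 2) continuous_const
    fun _ => half_pos hε
  obtain ⟨w, hw, hw_lt⟩ := (hg.contDiffOn.dense_compl_image_of_dimH_lt_finrank convex_univ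
    (subset_univ s) hs).exists_dist_lt 0 (half_pos hε)
  refine ⟨fun x => g x - w, by fun_prop, fun x => ?_, fun x hx h₀ => hw ⟨x, hx, sub_eq_zero.1 h₀⟩⟩
  calc dist (g x - w) (f x) ≤ dist (g x - w) (g x) + dist (g x) (f x) := dist_triangle _ _ _
    _ < ε / 2 + ε / 2 := add_lt_add (by simpa using hw_lt) (hgf x)
    _ = ε := add_halves ε

/-! ### Functions with the same winding up to powers of `z - a` -/

theorem div_mem_slitPlane_of_norm_sub_lt {z w : ℂ} (h : ‖z - w‖ < ‖w‖) :
    z / w ∈ Complex.slitPlane := by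
  have hw : 0 < ‖w‖ := (norm_nonneg _).trans_lt h
  have hnorm : ‖(z - w) / w‖ < 1 := by rwa [norm_div, div_lt_one hw]
  rw [show z / w = 1 + (z - w) / w by field_simp [norm_pos_iff.1 hw]; ring]
  exact Complex.mem_slitPlane_of_norm_lt_one hnorm

theorem exists_eq_mul_exp_of_norm_sub_lt {X : Type*} [TopologicalSpace X] {s : Set X}
    {f g : X → ℂ} (hf : ContinuousOn f s) (hg : ContinuousOn g s)
    (hfg : ∀ z ∈ s, ‖g z - f z‖ < ‖f z‖) :
    ∃ v : X → ℂ, ContinuousOn v s ∧ ∀ z ∈ s, g z = f z * Complex.exp (v z) := by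
  have hf₀ : ∀ z ∈ s, f z ≠ 0 := fun z hz =>
    norm_pos_iff.1 ((norm_nonneg _).trans_lt (hfg z hz))
  obtain ⟨v, hv, hvfg⟩ := hasLogOn_of_mapsTo_slitPlane (hg.div hf hf₀)
    fun z hz => div_mem_slitPlane_of_norm_sub_lt (hfg z hz)
  exact ⟨v, hv, fun z hz => by rw [hvfg z hz, Pi.div_apply, mul_div_cancel₀ _ (hf₀ z hz)]⟩

/-- On `s`, the functions `f` and `g` differ by a factor that is an integer power of `z - a` times
the exponential of a continuous function. -/
def WindingEquiv (a : ℂ) (s : Set ℂ) (f g : ℂ → ℂ) : Prop :=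
  ∃ (k : ℤ) (v : ℂ → ℂ), ContinuousOn v s ∧
    ∀ z ∈ s, g z = f z * ((z - a) ^ k * Complex.exp (v z))

namespace WindingEquiv

variable {a : ℂ} {s t : Set ℂ} {f g h : ℂ → ℂ}

theorem refl (a : ℂ) (s : Set ℂ) (f : ℂ → ℂ) : WindingEquiv a s f f :=
  ⟨0, 0, continuousOn_const, fun _ _ => by simp⟩

theorem mono (hfg : WindingEquiv a t f g) (hst : s ⊆ t) : WindingEquiv a s f g :=
  let ⟨k, v, hv, hvfg⟩ := hfg
  ⟨k, v, hv.mono hst, fun z hz => hvfg z (hst hz)⟩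

theorem symm (ha : a ∉ s) (hfg : WindingEquiv a s f g) : WindingEquiv a s g f := by
  obtain ⟨k, v, hv, hvfg⟩ := hfg
  refine ⟨-k, -v, hv.neg, fun z hz => ?_⟩
  have hza : (z - a) ^ k ≠ 0 := zpow_ne_zero _ (sub_ne_zero.2 (ne_of_mem_of_not_mem hz ha))
  rw [hvfg z hz, Pi.neg_apply, Complex.exp_neg, zpow_neg]
  field_simp [Complex.exp_ne_zero]

theorem trans (ha : a ∉ s) (hfg : WindingEquiv a s f g) (hgh : WindingEquiv a s g h) :
    WindingEquiv a s f h := by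
  obtain ⟨k, v, hv, hvfg⟩ := hfg
  obtain ⟨m, w, hw, hwgh⟩ := hgh
  refine ⟨k + m, v + w, hv.add hw, fun z hz => ?_⟩
  rw [hwgh z hz, hvfg z hz, zpow_add₀ (sub_ne_zero.2 (ne_of_mem_of_not_mem hz ha)),
    Pi.add_apply, Complex.exp_add]
  ring

theorem of_norm_sub_lt (a : ℂ) (hf : ContinuousOn f s) (hg : ContinuousOn g s)
    (hfg : ∀ z ∈ s, ‖g z - f z‖ < ‖f z‖) : WindingEquiv a s f g :=
  let ⟨v, hv, hvfg⟩ := exists_eq_mul_exp_of_norm_sub_lt hf hg hfg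
  ⟨0, v, hv, fun z hz => by rw [hvfg z hz, zpow_zero, one_mul]⟩

end WindingEquiv

theorem exists_sub_eq_sub_mul_exp_of_isPreconnected {Ω : Set ℂ} (hΩ : IsOpen Ω)
    (hΩc : IsPreconnected Ω) {a c : ℂ} (ha : a ∈ Ω) (hc : c ∈ Ω) :
    ∃ v : ℂ → ℂ, ContinuousOn v Ωᶜ ∧ ∀ z ∈ Ωᶜ, z - c = (z - a) * Complex.exp (v z) := by
  refine hΩc.induction₂ (fun c a => ∃ v : ℂ → ℂ, ContinuousOn v Ωᶜ ∧
    ∀ z ∈ Ωᶜ, z - c = (z - a) * Complex.exp (v z)) (fun x hx => ?_) ?_ ?_ hc ha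
  · obtain ⟨r, hr, hrΩ⟩ := Metric.isOpen_iff.1 hΩ x hx
    filter_upwards [mem_nhdsWithin_of_mem_nhds (ball_mem_nhds x (half_pos hr))] with y hy
    refine exists_eq_mul_exp_of_norm_sub_lt (by fun_prop) (by fun_prop) fun z hz => ?_
    have hzx : r ≤ dist z x := not_lt.1 fun h => hz (hrΩ h)
    rw [sub_sub_sub_cancel_left, ← dist_eq_norm, ← dist_eq_norm]
    linarith [mem_ball.1 hy, dist_triangle z y x]
  · rintro x y z - - - ⟨v, hv, hvz⟩ ⟨w, hw, hwz⟩
    refine ⟨w + v, hw.add hv, fun z hz => ?_⟩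
    rw [hvz z hz, hwz z hz, Pi.add_apply, Complex.exp_add, mul_assoc]
  · rintro x y - - ⟨v, hv, hvz⟩
    refine ⟨-v, hv.neg, fun z hz => ?_⟩
    rw [hvz z hz, mul_assoc, Pi.neg_apply, ← Complex.exp_add, add_neg_cancel, Complex.exp_zero,
      mul_one]

/-- `G` is divided by `(z - c) ^ k` outside the disc and replaced by a zero-free function inside. -/
theorem exists_windingEquiv_ne_zero_of_mem_ball {Ω : Set ℂ} (hΩ : IsOpen Ω)
    (hΩc : IsPreconnected Ω) {a c : ℂ} (ha : a ∈ Ω) {r : ℝ} (hr : 0 < r)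
    (hcr : closedBall c r ⊆ Ω) {G : ℂ → ℂ} (hG : Continuous G) (hG₀ : ∀ z ∈ sphere c r, G z ≠ 0) :
    ∃ Ψ : ℂ → ℂ, Continuous Ψ ∧ WindingEquiv a Ωᶜ G Ψ ∧
      ∀ z, Ψ z = 0 → z ∉ ball c r ∧ G z = 0 := by
  obtain ⟨k, u₀, hu₀, hGu₀⟩ := exists_eq_sub_zpow_mul_exp_on_sphere hr hG.continuousOn hG₀
  obtain ⟨u, hu, hu_eq⟩ := exists_continuous_eqOn_of_isClosed isClosed_sphere hu₀
  have hne : ∀ z ∈ (ball c r)ᶜ, z - c ≠ 0 := fun z hz =>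
    sub_ne_zero.2 (ne_of_mem_of_not_mem (mem_ball_self hr) hz).symm
  obtain ⟨Ψ, hΨ, hΨ_in, hΨ_out⟩ := exists_continuous_eqOn_closure_eqOn_compl isOpen_ball
    (f := fun z => Complex.exp (u z)) (g := fun z => G z * (z - c) ^ (-k)) (by fun_prop)
    (hG.continuousOn.mul (ContinuousOn.zpow₀ (by fun_prop) _ fun z hz => Or.inl (hne z hz)))
    (fun z hz => by
      rw [frontier_ball c hr.ne'] at hz
      have hzc := zpow_ne_zero k (hne z (fun h => (mem_ball.1 h).ne hz))
      beta_reduce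
      rw [hGu₀ z hz, hu_eq hz, zpow_neg]
      field_simp)
  obtain ⟨v, hv, hvz⟩ :=
    exists_sub_eq_sub_mul_exp_of_isPreconnected hΩ hΩc ha (hcr (mem_closedBall_self hr.le))
  refine ⟨Ψ, hΨ, ⟨-k, fun z => (-k : ℤ) * v z, by fun_prop, fun z hz => ?_⟩, fun z hz => ?_⟩
  · rw [hΨ_out (compl_subset_compl.2 (ball_subset_closedBall.trans hcr) hz)]
    beta_reduce
    rw [hvz z hz, mul_zpow, Complex.exp_int_mul]
  · by_cases hzr : z ∈ ball c r
    · exact absurd ((hΨ_in (subset_closure hzr)).symm.trans hz) (Complex.exp_ne_zero _)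
    · exact ⟨hzr, (mul_eq_zero.1 ((hΨ_out hzr).symm.trans hz)).resolve_right
        (zpow_ne_zero _ (hne z hzr))⟩

theorem exists_windingEquiv_ne_zero_of_mem_biUnion_ball {Ω : Set ℂ} (hΩ : IsOpen Ω)
    (hΩc : IsPreconnected Ω) {a : ℂ} (ha : a ∈ Ω) {ι : Type*} (t : Finset ι) {c : ι → ℂ}
    {r : ι → ℝ} (hr : ∀ i ∈ t, 0 < r i) (hcr : ∀ i ∈ t, closedBall (c i) (r i) ⊆ Ω) {G : ℂ → ℂ}
    (hG : Continuous G) (hG₀ : ∀ z ∈ ⋃ i ∈ t, sphere (c i) (r i), G z ≠ 0) :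
    ∃ Ψ : ℂ → ℂ, Continuous Ψ ∧ WindingEquiv a Ωᶜ G Ψ ∧
      ∀ z, Ψ z = 0 → z ∉ ⋃ i ∈ t, ball (c i) (r i) ∧ G z = 0 := by
  classical
  induction t using Finset.induction_on with
  | empty => exact ⟨G, hG, WindingEquiv.refl a _ G, fun z hz => ⟨by simp, hz⟩⟩
  | insert i t _ ih =>
    simp only [Finset.mem_insert, forall_eq_or_imp, iUnion_iUnion_eq_or_left, mem_union,
      not_or] at hr hcr hG₀ ⊢
    obtain ⟨Ψ, hΨ, hGΨ, hΨ₀⟩ := ih hr.2 hcr.2 fun z hz => hG₀ z (Or.inr hz)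
    obtain ⟨Ψ', hΨ', hΨΨ', hΨ'₀⟩ := exists_windingEquiv_ne_zero_of_mem_ball hΩ hΩc ha hr.1 hcr.1 hΨ
      fun z hz h₀ => hG₀ z (Or.inl hz) (hΨ₀ z h₀).2
    refine ⟨Ψ', hΨ', hGΨ.trans (notMem_compl_iff.2 ha) hΨΨ', fun z hz => ?_⟩
    obtain ⟨hzi, hz₀⟩ := hΨ'₀ z hz
    exact ⟨⟨hzi, (hΨ₀ z hz₀).1⟩, (hΨ₀ z hz₀).2⟩

theorem exists_finset_biUnion_ball_of_isCompact {X : Type*} [PseudoMetricSpace X] {K U : Set X}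
    (hK : IsCompact K) (hU : IsOpen U) (hKU : K ⊆ U) :
    ∃ (t : Finset K) (r : K → ℝ), (∀ x, 0 < r x) ∧ (∀ x : K, closedBall (x : X) (r x) ⊆ U) ∧
      K ⊆ ⋃ x ∈ t, ball (x : X) (r x) := by
  have hball (x : K) : ∃ r > 0, closedBall (x : X) r ⊆ U :=
    nhds_basis_closedBall.mem_iff.1 (hU.mem_nhds (hKU x.2))
  choose r hr hrU using hball
  obtain ⟨t, ht⟩ := hK.elim_finite_subcover (fun x : K => ball (x : X) (r x))
    (fun _ => isOpen_ball) fun x hx => mem_iUnion.2 ⟨⟨x, hx⟩, mem_ball_self (hr _)⟩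
  exact ⟨t, r, hr, hrU, ht⟩

theorem exists_windingEquiv_frontier_ne_zero_on_closure {Ω : Set ℂ} (hΩ : IsOpen Ω)
    (hΩc : IsPreconnected Ω) (hΩb : Bornology.IsBounded Ω) {a : ℂ} (ha : a ∈ Ω) {Φ : ℂ → ℂ}
    (hΦ : Continuous Φ) (hΦ₀ : ∀ z ∈ frontier Ω, Φ z ≠ 0) :
    ∃ Ψ : ℂ → ℂ, Continuous Ψ ∧ (∀ z ∈ closure Ω, Ψ z ≠ 0) ∧
      WindingEquiv a (frontier Ω) Φ Ψ := by
  have hfr : frontier Ω ⊆ Ωᶜ := fun z hz => (hΩ.frontier_eq ▸ hz).2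
  have hcl : IsCompact (closure Ω) := hΩb.isCompact_closure
  obtain ⟨δ, hδ, hδΦ⟩ := (hcl.of_isClosed_subset isClosed_frontier
    frontier_subset_closure).exists_forall_le' hΦ.norm.continuousOn
    (a := 0) (fun z hz => norm_pos_iff.2 (hΦ₀ z hz))
  have hKΩ : closure Ω ∩ {z | ‖Φ z‖ ≤ δ / 2} ⊆ Ω := fun z hz => by
    by_contra hzΩ
    have hzfr : z ∈ frontier Ω := hΩ.frontier_eq ▸ ⟨hz.1, hzΩ⟩
    linarith [hδΦ z hzfr, mem_ofPred.1 hz.2]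
  obtain ⟨t, r, hr, hrΩ, hcover⟩ := exists_finset_biUnion_ball_of_isCompact
    (hcl.inter_right (isClosed_le hΦ.norm continuous_const)) hΩ hKΩ
  have hdim : dimH (⋃ x ∈ t, sphere (x : ℂ) (r x)) < Module.finrank ℝ ℂ := by
    refine (dimH_bUnion t.countable_toSet _).trans_lt ?_
    exact (iSup₂_le fun _ _ => dimH_sphere_le_one _ _).trans_lt (b := 1) (by simp)
  obtain ⟨G, hG, hGΦ, hG₀⟩ := exists_continuous_dist_lt_forall_ne_zero hΦ (half_pos hδ) hdim
  obtain ⟨Ψ, hΨ, hGΨ, hΨ₀⟩ := exists_windingEquiv_ne_zero_of_mem_biUnion_ball hΩ hΩc ha t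
    (fun x _ => hr x) (fun x _ => hrΩ x) hG hG₀
  refine ⟨Ψ, hΨ, fun z hz h₀ => (hΨ₀ z h₀).1 (hcover ⟨hz, ?_⟩), ?_⟩
  · have hzΦ := hGΦ z
    rw [(hΨ₀ z h₀).2, dist_zero_left] at hzΦ
    exact hzΦ.le
  · have hΦG : WindingEquiv a (frontier Ω) Φ G :=
      .of_norm_sub_lt a hΦ.continuousOn hG.continuousOn fun z hz => by
        rw [← dist_eq_norm]
        linarith [hGΦ z, hδΦ z hz]
    exact hΦG.trans (fun h => hfr h ha) (hGΨ.mono hfr)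

theorem exists_eq_sub_zpow_mul_ne_zero_on_closure {Ω : Set ℂ} (hΩ : IsOpen Ω)
    (hΩc : IsPreconnected Ω) (hΩb : Bornology.IsBounded Ω) {a : ℂ} (ha : a ∈ Ω) {φ : ℂ → ℂ}
    (hφ : ContinuousOn φ (frontier Ω)) (hφ₀ : ∀ z ∈ frontier Ω, φ z ≠ 0) :
    ∃ (k : ℤ) (Ψ : ℂ → ℂ), Continuous Ψ ∧ (∀ z ∈ closure Ω, Ψ z ≠ 0) ∧
      ∀ z ∈ frontier Ω, φ z = (z - a) ^ k * Ψ z := by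
  obtain ⟨Φ, hΦ, hΦφ⟩ := exists_continuous_eqOn_of_isClosed isClosed_frontier hφ
  obtain ⟨Ψ, hΨ, hΨ₀, hΦΨ⟩ := exists_windingEquiv_frontier_ne_zero_on_closure hΩ hΩc hΩb ha hΦ
    fun z hz => (hΦφ hz).symm ▸ hφ₀ z hz
  have hafr : a ∉ frontier Ω := fun h => (hΩ.frontier_eq ▸ h).2 ha
  obtain ⟨k, v₀, hv₀, hΨΦ⟩ := hΦΨ.symm hafr
  obtain ⟨v, hv, hvv₀⟩ := exists_continuous_eqOn_of_isClosed isClosed_frontier hv₀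
  refine ⟨k, fun z => Ψ z * Complex.exp (v z), by fun_prop,
    fun z hz => mul_ne_zero (hΨ₀ z hz) (Complex.exp_ne_zero _), fun z hz => ?_⟩
  beta_reduce
  rw [← hΦφ hz, hΨΦ z hz, hvv₀ hz]
  ring

/-! ### Jordan curves in the boundary of a planar domain -/

theorem eq_zero_of_eqOn_sub_zpow_frontier {W : Set ℂ} (hW : IsOpen W)
    (hWb : Bornology.IsBounded W) {a : ℂ} (ha : a ∈ W) {f : ℂ → ℂ}
    (hf : ContinuousOn f (closure W)) (hf₀ : ∀ z ∈ closure W, f z ≠ 0) {k : ℤ}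
    (hfk : EqOn f (fun z => (z - a) ^ k) (frontier W)) : k = 0 := by
  have hne : ∀ z ∈ Wᶜ, z - a ≠ 0 := fun z hz => sub_ne_zero.2 (ne_of_mem_of_not_mem ha hz).symm
  obtain ⟨F, hF, hF_in, hF_out⟩ := exists_continuous_eqOn_closure_eqOn_compl hW hf
    (ContinuousOn.zpow₀ (by fun_prop) _ fun z hz => Or.inl (hne z hz)) hfk
  obtain ⟨l, hl, hlF⟩ := exists_continuous_exp_eq hF fun z => by
    by_cases hz : z ∈ W
    · exact (hF_in (subset_closure hz)).symm ▸ hf₀ z (subset_closure hz)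
    · exact (hF_out hz).symm ▸ zpow_ne_zero _ (hne z hz)
  obtain ⟨R, hR⟩ := hWb.subset_ball a
  exact eq_zero_of_hasLogOn_sub_zpow (pos_of_mem_ball (hR ha)) ⟨l, hl.continuousOn, fun z hz =>
    (hlF z).trans (hF_out fun hzW => (mem_ball.1 (hR hzW)).ne hz)⟩

theorem hasLogOn_closure_of_hasLogOn_frontier {X : Type*} [TopologicalSpace X]
    [SimplyConnectedSpace X] [LocallyPathConnectedSpace X] [NormalSpace X] {W : Set X}
    (hW : IsOpen W) {f : X → ℂ}
    (hf : ContinuousOn f (closure W)) (hf₀ : ∀ z ∈ closure W, f z ≠ 0)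
    (hfr : HasLogOn f (frontier W)) : HasLogOn f (closure W) := by
  obtain ⟨l₀, hl₀, hl₀f⟩ := hfr
  obtain ⟨l, hl, hll₀⟩ := exists_continuous_eqOn_of_isClosed isClosed_frontier hl₀
  obtain ⟨F, hF, hF_in, hF_out⟩ := exists_continuous_eqOn_closure_eqOn_compl hW hf
    (g := fun z => Complex.exp (l z)) (by fun_prop) fun z hz => by
      beta_reduce
      rw [← hl₀f z hz, hll₀ hz]
  obtain ⟨Λ, hΛ, hΛF⟩ := exists_continuous_exp_eq hF fun z => by
    by_cases hz : z ∈ W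
    · exact (hF_in (subset_closure hz)).symm ▸ hf₀ z (subset_closure hz)
    · exact (hF_out hz).symm ▸ Complex.exp_ne_zero _
  exact ⟨Λ, hΛ.continuousOn, fun z hz => (hΛF z).trans (hF_in hz)⟩

/-- The power of `z - a` in the factorization of `φ` over `Ω` has a zero-free extension to
`closure W`, so it is trivial. -/
theorem hasLogOn_frontier_of_subset_closure {Ω W : Set ℂ} (hΩ : IsOpen Ω) (hΩc : IsConnected Ω)
    (hΩb : Bornology.IsBounded Ω) (hW : IsOpen W) (hΩW : Ω ⊆ W) (hWΩ : W ⊆ closure Ω)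
    {φ : ℂ → ℂ} (hφ : ContinuousOn φ (frontier Ω)) (hφ₀ : ∀ z ∈ frontier Ω, φ z ≠ 0)
    (hφW : HasLogOn φ (frontier W)) : HasLogOn φ (frontier Ω) := by
  have hcl : closure W = closure Ω :=
    (closure_minimal hWΩ isClosed_closure).antisymm (closure_mono hΩW)
  have hfr : frontier W ⊆ frontier Ω := by
    rw [hΩ.frontier_eq, hW.frontier_eq, hcl]
    exact sdiff_subset_sdiff_right hΩW
  obtain ⟨a, ha⟩ := hΩc.nonempty
  obtain ⟨k, Ψ, hΨ, hΨ₀, hφΨ⟩ :=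
    exists_eq_sub_zpow_mul_ne_zero_on_closure hΩ hΩc.isPreconnected hΩb ha hφ hφ₀
  obtain rfl : k = 0 := by
    obtain ⟨l₀, hl₀, hl₀φ⟩ := hφW
    obtain ⟨l, hl, hll₀⟩ := exists_continuous_eqOn_of_isClosed isClosed_frontier hl₀
    refine eq_zero_of_eqOn_sub_zpow_frontier hW (hΩb.closure.subset hWΩ) (hΩW ha)
      (f := fun z => Complex.exp (l z) / Ψ z) ?_ (fun z hz => ?_) fun z hz => ?_
    · exact ContinuousOn.div (by fun_prop) hΨ.continuousOn fun z hz => hΨ₀ z (hcl ▸ hz)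
    · exact div_ne_zero (Complex.exp_ne_zero _) (hΨ₀ z (hcl ▸ hz))
    · beta_reduce
      rw [hll₀ hz, hl₀φ z hz, hφΨ z (hfr hz),
        mul_div_cancel_right₀ _ (hΨ₀ z (frontier_subset_closure (hfr hz)))]
  have hφΨ_eq : EqOn φ Ψ (frontier Ω) := fun z hz => by simpa using hφΨ z hz
  refine HasLogOn.congr (.mono ?_ frontier_subset_closure) hφΨ_eq
  rw [← hcl] at hΨ₀ ⊢
  exact hasLogOn_closure_of_hasLogOn_frontier hW hΨ.continuousOn hΨ₀
    (hφW.congr fun z hz => (hφΨ_eq (hfr hz)).symm)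

theorem exists_continuousOn_leftInvOn_image {X Y : Type*} [TopologicalSpace X] [Nonempty X]
    [TopologicalSpace Y] [T2Space Y] {K : Set X} (hK : IsCompact K) {γ : X → Y}
    (hγ : ContinuousOn γ K) (hγi : InjOn γ K) :
    ∃ g : Y → X, ContinuousOn g (γ '' K) ∧ LeftInvOn g γ K := by
  have hinv : LeftInvOn (Function.invFunOn γ K) γ K := hγi.leftInvOn_invFunOn
  refine ⟨_, continuousOn_iff_isClosed.2 fun t ht => ⟨γ '' (K ∩ t), ?_, ?_⟩, hinv⟩
  · exact ((hK.inter_right ht).image_of_continuousOn (hγ.mono inter_subset_left)).isClosed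
  · rw [inter_eq_left.2 (image_mono inter_subset_left), inter_comm K, hinv.image_inter']

theorem exists_continuousOn_jordan_union {γ : ℂ → ℂ} (hγ : ContinuousOn γ (sphere 0 1))
    (hγi : InjOn γ (sphere 0 1)) {L : Set ℂ} (hL : IsClosed L)
    (hdisj : Disjoint (γ '' sphere 0 1) L) {s₀ : ℂ} (hs₀ : s₀ ∈ sphere (0 : ℂ) 1) :
    ∃ φ : ℂ → ℂ, ContinuousOn φ (γ '' sphere 0 1 ∪ L) ∧
      (∀ s ∈ sphere (0 : ℂ) 1, φ (γ s) = -s / s₀) ∧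
      ∀ z ∈ γ '' sphere 0 1 ∪ L, z ≠ γ s₀ → φ z ∈ Complex.slitPlane := by
  classical
  obtain ⟨g, hg, hgγ⟩ := exists_continuousOn_leftInvOn_image (isCompact_sphere 0 1) hγ hγi
  have hJ : IsClosed (γ '' sphere 0 1) :=
    ((isCompact_sphere 0 1).image_of_continuousOn hγ).isClosed
  let φ : ℂ → ℂ := (γ '' sphere 0 1).piecewise (fun z => -g z / s₀) 1
  have hφJ : EqOn φ (fun z => -g z / s₀) (γ '' sphere 0 1) := piecewise_eqOn _ _ _
  have hφL : EqOn φ 1 L := fun z hz => piecewise_eq_of_notMem _ _ _ (hdisj.notMem_of_mem_right hz)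
  have hφγ (s : ℂ) (hs : s ∈ sphere (0 : ℂ) 1) : φ (γ s) = -s / s₀ := by
    rw [hφJ (mem_image_of_mem γ hs)]
    beta_reduce
    rw [hgγ hs]
  refine ⟨φ, ?_, hφγ, ?_⟩
  · exact ((hg.neg.div_const s₀).congr hφJ).union_of_isClosed (continuousOn_const.congr hφL) hJ hL
  · rintro _ (⟨s, hs, rfl⟩ | hz) hne
    · have hcirc : {-s / s₀} ⊆ sphere (0 : ℂ) 1 := by simp_all
      rw [hφγ s hs, ← singleton_subset_iff, Complex.subset_slitPlane_iff_of_subset_sphere hcirc]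
      rintro heq
      refine hne (congrArg γ ?_)
      have hs₀' : s₀ ≠ 0 := ne_of_mem_sphere hs₀ one_ne_zero
      rw [mem_singleton_iff, eq_div_iff hs₀'] at heq
      simpa using heq.symm
    · rw [hφL hz]
      exact Complex.one_mem_slitPlane

theorem jordan_notMem_interior_closure {Ω : Set ℂ} (hΩ : IsOpen Ω) (hΩc : IsConnected Ω)
    (hΩb : Bornology.IsBounded Ω) {γ : ℂ → ℂ} (hγ : ContinuousOn γ (sphere 0 1))
    (hγi : InjOn γ (sphere 0 1)) {L : Set ℂ} (hL : IsClosed L)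
    (hdisj : Disjoint (γ '' sphere 0 1) L) (hfr : frontier Ω = γ '' sphere 0 1 ∪ L)
    {z : ℂ} (hz : z ∈ γ '' sphere 0 1) : z ∉ interior (closure Ω) := by
  obtain ⟨s₀, hs₀, rfl⟩ := hz
  intro hz_int
  obtain ⟨φ, hφ, hφγ, hφ_slit⟩ := exists_continuousOn_jordan_union hγ hγi hL hdisj hs₀
  rw [← hfr] at hφ hφ_slit
  have hs₀_ne : s₀ ≠ 0 := ne_of_mem_sphere hs₀ one_ne_zero
  have hφ₀ : ∀ z ∈ frontier Ω, φ z ≠ 0 := fun z hz => by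
    rcases eq_or_ne z (γ s₀) with rfl | hne
    · simp [hφγ s₀ hs₀, hs₀_ne]
    · exact Complex.slitPlane_ne_zero (hφ_slit z hz hne)
  have hlog_W : HasLogOn φ (frontier (interior (closure Ω))) := by
    have hsub : frontier (interior (closure Ω)) ⊆ frontier Ω :=
      (frontier_interior_subset (s := closure Ω)).trans frontier_closure_subset
    refine hasLogOn_of_mapsTo_slitPlane (hφ.mono hsub) fun z hz => hφ_slit z (hsub hz) ?_
    rintro rfl
    rw [isOpen_interior.frontier_eq] at hz
    exact hz.2 hz_int
  obtain ⟨l, hl, hlφ⟩ := hasLogOn_frontier_of_subset_closure hΩ hΩc hΩb isOpen_interior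
    (interior_maximal subset_closure hΩ) interior_subset hφ hφ₀ hlog_W
  have hmaps : MapsTo γ (sphere 0 1) (frontier Ω) := fun s hs =>
    hfr ▸ Or.inl (mem_image_of_mem γ hs)
  have hlog_id : HasLogOn (fun s => (s - 0) ^ (1 : ℤ)) (sphere 0 1) := by
    refine ⟨fun s => l (γ s) + Complex.log (-s₀), (hl.comp hγ hmaps).add_const _, fun s hs => ?_⟩
    rw [Complex.exp_add, hlφ _ (hmaps hs), hφγ s hs, Complex.exp_log (neg_ne_zero.2 hs₀_ne)]
    field_simp
    simp
  exact one_ne_zero (eq_zero_of_hasLogOn_sub_zpow one_pos hlog_id)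

theorem interior_closure_eq_of_frontier_eq_iUnion_jordan {Ω : Set ℂ} (hΩ : IsOpen Ω)
    (hΩc : IsConnected Ω) (hΩb : Bornology.IsBounded Ω) {ι : Type*} [Finite ι] {γ : ι → ℂ → ℂ}
    (hγ : ∀ i, ContinuousOn (γ i) (sphere 0 1) ∧ InjOn (γ i) (sphere 0 1))
    (hdisj : Pairwise fun i j => Disjoint (γ i '' sphere 0 1) (γ j '' sphere 0 1))
    (hfr : frontier Ω = ⋃ i, γ i '' sphere 0 1) : interior (closure Ω) = Ω := by
  refine (interior_maximal subset_closure hΩ).antisymm' fun z hz => ?_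
  by_contra hzΩ
  have hz_fr : z ∈ frontier Ω := hΩ.frontier_eq ▸ ⟨interior_subset hz, hzΩ⟩
  obtain ⟨i, hzi⟩ := mem_iUnion.1 (hfr ▸ hz_fr)
  have hclosed (j : ι) : IsClosed (γ j '' sphere 0 1) :=
    ((isCompact_sphere 0 1).image_of_continuousOn (hγ j).1).isClosed
  refine jordan_notMem_interior_closure hΩ hΩc hΩb (hγ i).1 (hγ i).2
    (L := ⋃ j : {j // j ≠ i}, γ j '' sphere 0 1) (isClosed_iUnion_of_finite fun j => hclosed j)
    (disjoint_iUnion_right.2 fun j => hdisj j.2.symm) ?_ hzi hz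
  rw [hfr, iUnion_subtype]
  exact iSup_split_single _ i

/-! ### Regular open sets -/

theorem isPreconnected_ball_sdiff_center {E : Type*} [NormedAddCommGroup E] [NormedSpace ℝ E]
    (hE : 1 < Module.rank ℝ E) (c : E) {r : ℝ} (hr : 0 < r) : IsPreconnected (ball c r \ {c}) := by
  let e : OpenPartialHomeomorph E E := .univBall c r
  have hsource : e.source = univ := OpenPartialHomeomorph.univBall_source c r
  have himage : e '' {0}ᶜ = ball c r \ {c} := by
    rw [compl_eq_univ_sdiff, image_sdiff (injOn_univ.1 (hsource ▸ e.injOn)), ← hsource,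
      e.image_source_eq_target, image_singleton, OpenPartialHomeomorph.univBall_apply_zero,
      OpenPartialHomeomorph.univBall_target c hr]
  rw [← himage]
  exact (isConnected_compl_singleton_of_one_lt_rank hE 0).isPreconnected.image _
    (OpenPartialHomeomorph.continuous_univBall c r).continuousOn

theorem frequently_mem_frontier_of_interior_closure_eq {E : Type*} [NormedAddCommGroup E]
    [NormedSpace ℝ E] (hE : 1 < Module.rank ℝ E) {U : Set E} (hU : interior (closure U) = U)
    {x : E} (hx : x ∈ frontier U) : ∃ᶠ y in 𝓝[≠] x, y ∈ frontier U := by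
  intro hev
  obtain ⟨r, hr, hball⟩ := Metric.mem_nhdsWithin_iff.1 hev
  have hUo : IsOpen U := hU ▸ isOpen_interior
  have hcover : ball x r \ {x} ⊆ U ∪ (closure U)ᶜ := fun y hy => by
    have hyfr : y ∉ frontier U := hball hy
    rw [hUo.frontier_eq, Set.mem_sdiff, not_and_not_right] at hyfr
    exact (em (y ∈ closure U)).imp hyfr id
  obtain ⟨y, hyU, hy⟩ : (U ∩ ball x r).Nonempty := by
    rw [inter_comm]
    exact mem_closure_iff.1 (frontier_subset_closure hx) _ isOpen_ball (mem_ball_self hr)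
  have hxU : x ∉ U := (hUo.frontier_eq ▸ hx).2
  have hsub : ball x r \ {x} ⊆ U :=
    (isPreconnected_ball_sdiff_center hE x hr).subset_left_of_subset_union hUo
      isClosed_closure.isOpen_compl (disjoint_compl_right.mono_left subset_closure) hcover
      ⟨y, ⟨hy, ne_of_mem_of_not_mem hyU hxU⟩, hyU⟩
  refine hxU (hU ▸ mem_interior.2 ⟨ball x r, fun z hz => ?_, isOpen_ball, mem_ball_self hr⟩)
  rcases eq_or_ne z x with rfl | hzx
  · exact frontier_subset_closure hx
  · exact subset_closure (hsub ⟨hz, hzx⟩)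

/-! ### Uniform limits -/

theorem exists_tendstoUniformlyOn_closure {ι X E : Type*} [TopologicalSpace X] [UniformSpace E]
    [CompleteSpace E] [T2Space E] {s : Set X} {F : ι → X → E} {f : X → E} {l : Filter ι}
    [l.NeBot] (hF : ∀ i, ContinuousOn (F i) (closure s)) (hFf : TendstoUniformlyOn F f l s) :
    ∃ g : X → E, ContinuousOn g (closure s) ∧ EqOn g f s ∧
      TendstoUniformlyOn F g l (closure s) := by
  have hcauchy : UniformCauchySeqOn F l (closure s) := fun V hV => by
    obtain ⟨W, ⟨hW, hWc⟩, hWV⟩ := uniformity_hasBasis_closed.mem_iff.1 hV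
    filter_upwards [hFf.uniformCauchySeqOn W hW] with i hi x hx
    have hmaps : MapsTo (fun x => (F i.1 x, F i.2 x)) s W := hi
    exact hWV (hWc.closure_eq ▸ hmaps.closure_of_continuousOn ((hF i.1).prodMk (hF i.2)) hx)
  have hlim (x : X) : ∃ y, x ∈ closure s → Tendsto (F · x) l (𝓝 y) := by
    by_cases hx : x ∈ closure s
    · exact (cauchy_map_iff_exists_tendsto.1 (hcauchy.cauchy_map hx)).imp fun _ hy _ => hy
    · exact ⟨f x, fun h => absurd h hx⟩
  choose g hg using hlim
  have hFg : TendstoUniformlyOn F g l (closure s) := hcauchy.tendstoUniformlyOn_of_tendsto hg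
  exact ⟨g, hFg.continuousOn (.of_forall hF), fun x hx =>
    tendsto_nhds_unique (hg x (subset_closure hx)) (hFf.tendsto_at hx), hFg⟩

theorem extendFrom_eqOn_closure {X Y : Type*} [TopologicalSpace X] [TopologicalSpace Y] [T2Space Y]
    {s : Set X} {f g : X → Y} (hg : ContinuousOn g (closure s)) (hgf : EqOn g f s) :
    EqOn (extendFrom s f) g (closure s) := fun x hx =>
  extendFrom_eq hx <| ((hg x hx).mono subset_closure).tendsto.congr' <|
    eventuallyEq_nhdsWithin_of_eqOn hgf

theorem differentiableOn_iteratedDeriv {E : Type*} [NormedAddCommGroup E] [NormedSpace ℂ E]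
    [CompleteSpace E] {U : Set ℂ} (hU : IsOpen U) {f : ℂ → E} (hf : DifferentiableOn ℂ f U)
    (j : ℕ) : DifferentiableOn ℂ (iteratedDeriv j f) U := by
  induction j with
  | zero => rwa [iteratedDeriv_zero]
  | succ j ih => exact iteratedDeriv_succ (f := f) ▸ ih.deriv hU

theorem tendstoLocallyUniformlyOn_iteratedDeriv {ι E : Type*} [NormedAddCommGroup E]
    [NormedSpace ℂ E] [CompleteSpace E] {U : Set ℂ} (hU : IsOpen U) {F : ι → ℂ → E} {f : ℂ → E}
    {l : Filter ι} (hF : ∀ i, DifferentiableOn ℂ (F i) U) (hFf : TendstoLocallyUniformlyOn F f l U)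
    (j : ℕ) :
    TendstoLocallyUniformlyOn (fun i => iteratedDeriv j (F i)) (iteratedDeriv j f) l U := by
  induction j with
  | zero => simpa only [iteratedDeriv_zero] using hFf
  | succ j ih =>
    simp only [iteratedDeriv_succ]
    exact ih.deriv (.of_forall fun i => differentiableOn_iteratedDeriv hU (hF i) j) hU

/-! ### Power series with Cauchy bounds -/

theorem norm_mul_pow_le_mul_pow {𝕜 : Type*} [NormedDivisionRing 𝕜] {a z : 𝕜} {M ρ q : ℝ}
    (hρ : 0 < ρ) {k : ℕ} (ha : ‖a‖ ≤ M / ρ ^ k) (hz : ‖z‖ / ρ ≤ q) :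
    ‖a * z ^ k‖ ≤ M * q ^ k := by
  have hM : 0 ≤ M := by
    have := (norm_nonneg a).trans ha
    rwa [le_div_iff₀ (by positivity), zero_mul] at this
  calc ‖a * z ^ k‖ = ‖a‖ * ‖z‖ ^ k := by rw [norm_mul, norm_pow]
    _ ≤ M / ρ ^ k * ‖z‖ ^ k := by gcongr
    _ = M * (‖z‖ / ρ) ^ k := by rw [div_pow]; ring
    _ ≤ M * q ^ k := by gcongr

theorem differentiableOn_tsum_mul_sub_pow {a : ℕ → ℂ} {c : ℂ} {M ρ : ℝ}
    (ha : ∀ k, ‖a k‖ ≤ M / ρ ^ k) :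
    DifferentiableOn ℂ (fun z => ∑' k, a k * (z - c) ^ k) (ball c ρ) := fun z hz => by
  have hρ : 0 < ρ := pos_of_mem_ball hz
  obtain ⟨r, hzr, hrρ⟩ := exists_between (mem_ball.1 hz)
  have hr : 0 < r := dist_nonneg.trans_lt hzr
  have hdiff : DifferentiableOn ℂ (fun z => ∑' k, a k * (z - c) ^ k) (ball c r) := by
    refine Complex.differentiableOn_tsum_of_summable_norm (u := fun k => M * (r / ρ) ^ k)
      ((summable_geometric_of_lt_one (by positivity) ((div_lt_one hρ).2 hrρ)).mul_left M)
      (fun k => by fun_prop) isOpen_ball fun k w hw => norm_mul_pow_le_mul_pow hρ (ha k) ?_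
    rw [← dist_eq_norm]
    exact div_le_div_of_nonneg_right (mem_ball.1 hw).le hρ.le
  exact (hdiff.differentiableAt (isOpen_ball.mem_nhds hzr)).differentiableWithinAt

/-- The restrictions to `S` of the power series `∑ aₖ (z - c)ᵏ` whose coefficients satisfy the
Cauchy estimates `‖aₖ‖ ≤ M / ρᵏ` of a function bounded by `M` on the disc of radius `ρ`. -/
def powerSeriesTraces (S : Set ℂ) (c : ℂ) (ρ M : ℝ) : Set (S → ℂ) :=
  (fun (a : ℕ → ℂ) (z : S) => ∑' k, a k * (z - c) ^ k) ''
    univ.pi fun k => closedBall 0 (M / ρ ^ k)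

theorem isCompact_powerSeriesTraces {S : Set ℂ} {c : ℂ} {ρ : ℝ} (hS : S ⊆ ball c ρ) (M : ℝ) :
    IsCompact (powerSeriesTraces S c ρ M) := by
  refine (isCompact_univ_pi fun k => isCompact_closedBall 0 (M / ρ ^ k)).image_of_continuousOn <|
    continuousOn_pi.2 fun z => ?_
  have hρ : 0 < ρ := pos_of_mem_ball (hS z.2)
  have hz : ‖(z : ℂ) - c‖ / ρ < 1 := (div_lt_one hρ).2 (dist_eq_norm (z : ℂ) c ▸ hS z.2)
  refine continuousOn_tsum (u := fun k => M * (‖(z : ℂ) - c‖ / ρ) ^ k) (fun k => by fun_prop)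
    ((summable_geometric_of_lt_one (by positivity) hz).mul_left M) fun k a ha =>
      norm_mul_pow_le_mul_pow hρ (mem_closedBall_zero_iff.1 (ha k trivial)) le_rfl

theorem domRestrict_mem_powerSeriesTraces {F : ℂ → ℂ} {c : ℂ} {ρ M : ℝ} (hρ : 0 < ρ)
    (hF : DiffContOnCl ℂ F (ball c ρ)) (hM : ∀ z ∈ sphere c ρ, ‖F z‖ ≤ M) {S : Set ℂ}
    (hS : S ⊆ ball c ρ) : S.domRestrict F ∈ powerSeriesTraces S c ρ M := by
  refine ⟨fun k => (k.factorial : ℂ)⁻¹ * iteratedDeriv k F c, fun k _ => ?_, funext fun z => ?_⟩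
  · rw [mem_closedBall_zero_iff, norm_mul, norm_inv, Complex.norm_natCast,
      inv_mul_le_iff₀ (by positivity), ← mul_div_assoc]
    exact Complex.norm_iteratedDeriv_le_of_forall_mem_sphere_norm_le k hρ hF hM
  · rw [domRestrict_apply, ← (Complex.hasSum_taylorSeries_on_ball hF.differentiableOn
      (hS z.2)).tsum_eq]
    refine tsum_congr fun k => ?_
    simp only [smul_eq_mul]
    ring

theorem eq_zero_of_frequently_mul_sub_eq {V : Set ℂ} (hV : IsOpen V) (hVc : IsPreconnected V)
    {F : ℂ → ℂ} (hF : DifferentiableOn ℂ F V) {x ζ t : ℂ} (hx : x ∈ V) (hζ : ζ ∈ V)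
    (h : ∃ᶠ z in 𝓝[≠] x, F z * (z - ζ) = t) : t = 0 := by
  have hG : AnalyticOnNhd ℂ (fun z => F z * (z - ζ)) V :=
    (hF.mul (by fun_prop)).analyticOnNhd hV
  simpa using (hG.eqOn_of_preconnected_of_frequently_eq analyticOnNhd_const hVc hx h hζ).symm

/-! ### The space `A^p(U)` -/

theorem MemAp.continuousOn_extendFrom {p : ℕ∞} {U : Set ℂ} {f : ℂ → ℂ} (hf : MemAp p U f) :
    ContinuousOn (extendFrom U f) (closure U) := by
  obtain ⟨g, hg, hgf⟩ := hf.2 0 (by simp)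
  exact hg.congr (extendFrom_eqOn_closure hg (iteratedDeriv_zero (f := f) ▸ hgf))

theorem MemAp.extendFrom_eqOn {p : ℕ∞} {U : Set ℂ} {f : ℂ → ℂ} (hf : MemAp p U f) :
    EqOn (extendFrom U f) f U := fun _ hz =>
  extendFrom_eq (subset_closure hz) (hf.1.continuousOn _ hz)

theorem memAp_of_differentiableOn (p : ℕ∞) {U V : Set ℂ} (hV : IsOpen V) (hUV : closure U ⊆ V)
    {f : ℂ → ℂ} (hf : DifferentiableOn ℂ f V) : MemAp p U f :=
  ⟨hf.mono (subset_closure.trans hUV), fun j _ =>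
    ⟨_, (differentiableOn_iteratedDeriv hV hf j).continuousOn.mono hUV, eqOn_refl _ _⟩⟩

theorem iteratedDeriv_add_const_mul_eqOn {U : Set ℂ} (hU : IsOpen U) {f h : ℂ → ℂ}
    (hf : DifferentiableOn ℂ f U) (hh : DifferentiableOn ℂ h U) (t : ℂ) (j : ℕ) :
    EqOn (iteratedDeriv j fun z => f z + t * h z)
      (fun z => iteratedDeriv j f z + t * iteratedDeriv j h z) U := fun z hz => by
  have hfz : ContDiffAt ℂ j f z := (hf.contDiffOn hU).contDiffAt (hU.mem_nhds hz)
  have hhz : ContDiffAt ℂ j h z := (hh.contDiffOn hU).contDiffAt (hU.mem_nhds hz)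
  rw [iteratedDeriv_fun_add hfz (contDiffAt_const.mul hhz), iteratedDeriv_const_mul_field]

theorem MemAp.add_const_mul {p : ℕ∞} {U : Set ℂ} (hU : IsOpen U) {f h : ℂ → ℂ}
    (hf : MemAp p U f) (hh : MemAp p U h) (t : ℂ) : MemAp p U fun z => f z + t * h z := by
  refine ⟨hf.1.add (hh.1.const_mul t), fun j hj => ?_⟩
  obtain ⟨f', hf', hff'⟩ := hf.2 j hj
  obtain ⟨h', hh', hhh'⟩ := hh.2 j hj
  refine ⟨fun z => f' z + t * h' z, by fun_prop, fun z hz => ?_⟩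
  rw [iteratedDeriv_add_const_mul_eqOn hU hf.1 hh.1 t j hz]
  beta_reduce
  rw [hff' hz, hhh' hz]

theorem memAp_of_tendstoUniformlyOn {p : ℕ∞} {U : Set ℂ} (hU : IsOpen U) {ι : Type*}
    {l : Filter ι} [l.NeBot] {F : ι → ℂ → ℂ} {f : ℂ → ℂ} (hF : ∀ i, MemAp p U (F i))
    (hFf : ∀ j : ℕ, (j : ℕ∞) ≤ p →
      TendstoUniformlyOn (fun i => iteratedDeriv j (F i)) (iteratedDeriv j f) l U) :
    MemAp p U f := by
  have hFf₀ : TendstoUniformlyOn F f l U := by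
    simpa only [iteratedDeriv_zero] using hFf 0 (by simp)
  refine ⟨hFf₀.tendstoLocallyUniformlyOn.differentiableOn (.of_forall fun i => (hF i).1) hU,
    fun j hj => ?_⟩
  choose G hG hGF using fun i => (hF i).2 j hj
  obtain ⟨g, hg, hgf, -⟩ := exists_tendstoUniformlyOn_closure hG
    ((hFf j hj).congr (.of_forall fun i => (hGF i).symm))
  exact ⟨g, hg, hgf⟩

/-- The derivatives of order at most `p` of `f` on `U`, in the product of spaces of uniform
convergence that defines `apTop`; the coordinates above `p` are zero. -/
noncomputable def apDerivs (p : ℕ∞) (U : Set ℂ) (f : ℂ → ℂ) : ℕ → UniformFun U ℂ := fun j =>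
  UniformFun.ofFun fun z : U => if (j : ℕ∞) ≤ p then iteratedDeriv j f z else 0

theorem tendsto_apDerivs_iff {p : ℕ∞} {U : Set ℂ} {ι : Type*} {l : Filter ι} {F : ι → ℂ → ℂ}
    {f : ℂ → ℂ} :
    Tendsto (fun i => apDerivs p U (F i)) l (𝓝 (apDerivs p U f)) ↔ ∀ j : ℕ, (j : ℕ∞) ≤ p →
      TendstoUniformlyOn (fun i => iteratedDeriv j (F i)) (iteratedDeriv j f) l U := by
  rw [tendsto_pi_nhds]
  refine forall_congr' fun j => ?_
  rw [UniformFun.tendsto_iff_tendstoUniformly]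
  by_cases hj : (j : ℕ∞) ≤ p
  · simp only [apDerivs, hj, if_true, true_imp_iff,
      tendstoUniformlyOn_iff_tendstoUniformly_comp_coe]
    rfl
  · simp only [apDerivs, hj, if_false, false_imp_iff, iff_true]
    exact fun V hV => .of_forall fun _ _ => refl_mem_uniformity hV

theorem exists_apDerivs_eq_of_tendsto {p : ℕ∞} {U : Set ℂ} (hU : IsOpen U) {ι : Type*}
    {l : Filter ι} [l.NeBot] {F : ι → ℂ → ℂ} (hF : ∀ i, DifferentiableOn ℂ (F i) U)
    {G : ℕ → UniformFun U ℂ} (hFG : Tendsto (fun i => apDerivs p U (F i)) l (𝓝 G)) :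
    ∃ f, apDerivs p U f = G := by
  classical
  have hunif (j : ℕ) := UniformFun.tendsto_iff_tendstoUniformly.1 (tendsto_pi_nhds.1 hFG j)
  let f : ℂ → ℂ := fun z => if h : z ∈ U then UniformFun.toFun (G 0) ⟨z, h⟩ else 0
  have hf : f ∘ ((↑) : U → ℂ) = UniformFun.toFun (G 0) := funext fun z => by simp [f]
  have hFf : TendstoUniformlyOn F f l U := by
    rw [tendstoUniformlyOn_iff_tendstoUniformly_comp_coe, hf]
    simpa [apDerivs, Function.comp_def] using hunif 0
  refine ⟨f, funext fun j => UniformFun.toFun.injective (funext fun z => ?_)⟩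
  refine tendsto_nhds_unique (f := fun i => UniformFun.toFun (apDerivs p U (F i) j) z) ?_
    ((hunif j).tendsto_at z)
  by_cases hj : (j : ℕ∞) ≤ p
  · simpa [apDerivs, hj] using (tendstoLocallyUniformlyOn_iteratedDeriv hU hF
      hFf.tendstoLocallyUniformlyOn j).tendsto_at z.2
  · simp [apDerivs, hj]

namespace ApSpace

variable {p : ℕ∞} {U : Set ℂ}

noncomputable instance : TopologicalSpace (ApSpace p U) := apTop p U

theorem tendsto_nhds_iff {ι : Type*} {l : Filter ι} {F : ι → ApSpace p U} {f : ApSpace p U} :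
    Tendsto F l (𝓝 f) ↔ ∀ j : ℕ, (j : ℕ∞) ≤ p →
      TendstoUniformlyOn (fun i => iteratedDeriv j (F i).1) (iteratedDeriv j f.1) l U := by
  have hind : IsInducing fun f : ApSpace p U => apDerivs p U f.1 := ⟨rfl⟩
  rw [hind.tendsto_nhds_iff]
  exact tendsto_apDerivs_iff

theorem isClosed_range_apDerivs (p : ℕ∞) (hU : IsOpen U) :
    IsClosed (range fun f : ApSpace p U => apDerivs p U f.1) := by
  refine isClosed_of_closure_subset fun G hG => ?_
  rw [mem_closure_iff_frequently, ← comap_neBot_iff_frequently] at hG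
  have hlim : Tendsto (fun f : ApSpace p U => apDerivs p U f.1)
      (comap (fun f : ApSpace p U => apDerivs p U f.1) (𝓝 G)) (𝓝 G) := tendsto_comap
  obtain ⟨f, rfl⟩ := exists_apDerivs_eq_of_tendsto hU (fun f => f.2.1) hlim
  exact ⟨⟨f, memAp_of_tendstoUniformlyOn hU (fun f => f.2) (tendsto_apDerivs_iff.1 hlim)⟩, rfl⟩

theorem baireSpace (p : ℕ∞) (hU : IsOpen U) : BaireSpace (ApSpace p U) := by
  let us : UniformSpace (ApSpace p U) :=
    .comap (fun f : ApSpace p U => apDerivs p U f.1) inferInstance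
  have hind : IsUniformInducing fun f : ApSpace p U => apDerivs p U f.1 := ⟨rfl⟩
  have : CompleteSpace (ApSpace p U) :=
    (completeSpace_iff_isComplete_range hind).2 (isClosed_range_apDerivs p hU).isComplete
  have : (uniformity (ApSpace p U)).IsCountablyGenerated :=
    hind.comap_uniformity ▸ inferInstance
  exact (inferInstance : @BaireSpace (ApSpace p U) us.toTopologicalSpace)

theorem continuous_extendFrom_apply {z : ℂ} (hz : z ∈ closure U) :
    Continuous fun f : ApSpace p U => extendFrom U f.1 z := by
  refine continuous_iff_continuousAt.2 fun f => ?_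
  have hunif : TendstoUniformlyOn (fun f : ApSpace p U => f.1) f.1 (𝓝 f) U := by
    simpa only [iteratedDeriv_zero, id_eq] using tendsto_nhds_iff.1 tendsto_id 0 (by simp)
  obtain ⟨g, hg, hgf, hlim⟩ := exists_tendstoUniformlyOn_closure
    (fun f : ApSpace p U => f.2.continuousOn_extendFrom)
    (hunif.congr (.of_forall fun f => f.2.extendFrom_eqOn.symm))
  rw [ContinuousAt, extendFrom_eqOn_closure hg hgf hz]
  exact hlim.tendsto_at hz

/-- The function `f + t h` in `A^p(U)`. -/
def addConstMul (hU : IsOpen U) (f h : ApSpace p U) (t : ℂ) : ApSpace p U :=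
  ⟨fun z => f.1 z + t * h.1 z, f.2.add_const_mul hU h.2 t⟩

theorem extendFrom_addConstMul (hU : IsOpen U) (f h : ApSpace p U) (t : ℂ) {z : ℂ}
    (hz : z ∈ closure U) :
    extendFrom U (addConstMul hU f h t).1 z = extendFrom U f.1 z + t * extendFrom U h.1 z :=
  extendFrom_eqOn_closure (g := fun z => extendFrom U f.1 z + t * extendFrom U h.1 z)
    (f.2.continuousOn_extendFrom.add (h.2.continuousOn_extendFrom.const_mul t))
    (fun w hw => by
      beta_reduce
      rw [f.2.extendFrom_eqOn hw, h.2.extendFrom_eqOn hw, addConstMul]) hz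

theorem tendsto_addConstMul_zero (hU : IsOpen U) (hUb : Bornology.IsBounded U)
    (f h : ApSpace p U) : Tendsto (addConstMul hU f h) (𝓝 0) (𝓝 f) := by
  refine tendsto_nhds_iff.2 fun j hj => Metric.tendstoUniformlyOn_iff.2 fun ε hε => ?_
  obtain ⟨g, hg, hgh⟩ := h.2.2 j hj
  obtain ⟨M, hM⟩ := hUb.isCompact_closure.exists_bound_of_continuousOn hg
  have hlim : Tendsto (fun t : ℂ => ‖t‖ * M) (𝓝 0) (𝓝 0) :=
    (Continuous.tendsto' (by fun_prop) 0 0 (by simp))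
  filter_upwards [hlim.eventually_lt_const hε] with t ht z hz
  rw [addConstMul, iteratedDeriv_add_const_mul_eqOn hU f.2.1 h.2.1 t j hz]
  beta_reduce
  rw [← hgh hz, dist_self_add_right, norm_mul]
  exact (mul_le_mul_of_nonneg_left (hM z (subset_closure hz)) (norm_nonneg t)).trans_lt ht

/-! ### Functions whose boundary trace is a power series -/

/-- The functions in `A^p(U)` whose boundary values in the disc of center `c` and radius `ρ` are
those of a power series with Cauchy bounds `M / ρᵏ` on its coefficients. -/
def powerSeriesOnFrontier (p : ℕ∞) (U : Set ℂ) (c : ℂ) (ρ M : ℝ) : Set (ApSpace p U) :=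
  {f | (ball c ρ ∩ frontier U).domRestrict (extendFrom U f.1) ∈
    powerSeriesTraces (ball c ρ ∩ frontier U) c ρ M}

theorem isClosed_powerSeriesOnFrontier (p : ℕ∞) (U : Set ℂ) (c : ℂ) (ρ M : ℝ) :
    IsClosed (powerSeriesOnFrontier p U c ρ M) :=
  (isCompact_powerSeriesTraces inter_subset_left M).isClosed.preimage <| continuous_pi fun z =>
    continuous_extendFrom_apply (frontier_subset_closure z.2.2)

theorem exists_differentiableOn_eq_extendFrom {c : ℂ} {ρ M : ℝ} {f : ApSpace p U}
    (hf : f ∈ powerSeriesOnFrontier p U c ρ M) :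
    ∃ F : ℂ → ℂ, DifferentiableOn ℂ F (ball c ρ) ∧
      ∀ z ∈ ball c ρ ∩ frontier U, F z = extendFrom U f.1 z := by
  obtain ⟨a, ha, haf⟩ := hf
  exact ⟨_, differentiableOn_tsum_mul_sub_pow fun k => mem_closedBall_zero_iff.1 (ha k trivial),
    fun z hz => congrFun haf ⟨z, hz⟩⟩

theorem not_nowhereExtAp_of_mem_powerSeriesOnFrontier {c : ℂ} (hc : c ∈ frontier U) {ρ M : ℝ}
    (hρ : 0 < ρ) {f : ApSpace p U} (hf : f ∈ powerSeriesOnFrontier p U c ρ M) :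
    ¬ NowhereExtAp U f.1 := fun hext =>
  let ⟨F, hF, hFf⟩ := exists_differentiableOn_eq_extendFrom hf
  hext ⟨c, hc, ρ, hρ, F, hF, _, f.2.continuousOn_extendFrom, f.2.extendFrom_eqOn, hFf⟩

theorem exists_mem_powerSeriesOnFrontier {D : Set ℂ} (hD : frontier U ⊆ closure D)
    {f : ApSpace p U} (hf : ¬ NowhereExtAp U f.1) :
    ∃ c ∈ D, ∃ m n : ℕ, f ∈ powerSeriesOnFrontier p U c (1 / (m + 1)) n := by
  obtain ⟨z₀, hz₀, r, hr, F, hF, g, hg, hgf, hFg⟩ := not_not.1 hf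
  obtain ⟨c, hc, hcz₀⟩ := Metric.mem_closure_iff.1 (hD hz₀) (r / 2) (half_pos hr)
  obtain ⟨m, hm⟩ := exists_nat_one_div_lt (half_pos hr)
  have hsub : closedBall c (1 / (m + 1)) ⊆ ball z₀ r :=
    closedBall_subset_ball' (by rw [dist_comm c]; linarith)
  obtain ⟨M, hM⟩ := (isCompact_closedBall c (1 / (m + 1))).exists_bound_of_continuousOn
    (hF.continuousOn.mono hsub)
  obtain ⟨n, hn⟩ := exists_nat_ge M
  have hF_mem := domRestrict_mem_powerSeriesTraces Nat.one_div_pos_of_nat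
    (hF.diffContOnCl_ball hsub) (fun z hz => (hM z (sphere_subset_closedBall hz)).trans hn)
    (inter_subset_left (t := frontier U))
  refine ⟨c, hc, m, n, ?_⟩
  rwa [powerSeriesOnFrontier, mem_ofPred, domRestrict_eq_domRestrict_iff.2]
  intro z hz
  rw [extendFrom_eqOn_closure hg hgf (frontier_subset_closure hz.2),
    hFg z ⟨hsub (ball_subset_closedBall hz.1), hz.2⟩]

theorem setOf_nowhereExtAp_eq_iInter {D : Set ℂ} (hDU : D ⊆ frontier U)
    (hUD : frontier U ⊆ closure D) :
    {f : ApSpace p U | NowhereExtAp U f.1} =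
      ⋂ q : D × ℕ × ℕ, (powerSeriesOnFrontier p U q.1 (1 / (q.2.1 + 1)) q.2.2)ᶜ := by
  ext f
  refine ⟨fun hf => mem_iInter.2 fun q hq => ?_, fun hf => by_contra fun hext => ?_⟩
  · exact not_nowhereExtAp_of_mem_powerSeriesOnFrontier (hDU q.1.2) Nat.one_div_pos_of_nat hq hf
  · obtain ⟨c, hc, m, n, hfc⟩ := exists_mem_powerSeriesOnFrontier hUD hext
    exact mem_iInter.1 hf (⟨c, hc⟩, m, n) hfc

/-- A perturbation `f + t / (z - ζ)` with `ζ` in the disc but outside `closure U` leaves the set: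
otherwise `t / (z - ζ)` would agree on the boundary with a function holomorphic at `ζ`. -/
theorem interior_powerSeriesOnFrontier_eq_empty (hUb : Bornology.IsBounded U)
    (hU : interior (closure U) = U) {c : ℂ} (hc : c ∈ frontier U) {ρ : ℝ} (hρ : 0 < ρ) (M : ℝ) :
    interior (powerSeriesOnFrontier p U c ρ M) = ∅ := by
  have hUo : IsOpen U := hU ▸ isOpen_interior
  obtain ⟨ζ, hζU, hζ⟩ : ∃ ζ ∈ (closure U)ᶜ, dist c ζ < ρ := by
    refine Metric.mem_closure_iff.1 ?_ ρ hρ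
    rw [closure_compl, hU]
    exact (hUo.frontier_eq ▸ hc).2
  have hne : ∀ z ∈ closure U, z - ζ ≠ 0 := fun z hz => sub_ne_zero.2 (ne_of_mem_of_not_mem hz hζU)
  let h : ApSpace p U := ⟨fun z => (z - ζ)⁻¹, memAp_of_differentiableOn p isOpen_compl_singleton
    (subset_compl_singleton_iff.2 hζU) fun z hz =>
      DifferentiableAt.differentiableWithinAt (by fun_prop (disch := exact sub_ne_zero.2 hz))⟩
  have hh : EqOn (extendFrom U h.1) (fun z => (z - ζ)⁻¹) (closure U) :=
    extendFrom_eqOn_closure (ContinuousOn.inv₀ (by fun_prop) hne) (eqOn_refl _ _)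
  refine eq_empty_iff_forall_notMem.2 fun f hf => ?_
  obtain ⟨t, htf, ht₀⟩ := (((tendsto_addConstMul_zero hUo hUb f h).eventually
    (mem_interior_iff_mem_nhds.1 hf)).filter_mono nhdsWithin_le_nhds).and
      (self_mem_nhdsWithin (s := {0}ᶜ)) |>.exists
  obtain ⟨F₁, hF₁, hF₁f⟩ := exists_differentiableOn_eq_extendFrom (interior_subset hf)
  obtain ⟨F₂, hF₂, hF₂f⟩ := exists_differentiableOn_eq_extendFrom htf
  refine ht₀ (eq_zero_of_frequently_mul_sub_eq isOpen_ball (convex_ball c ρ).isPreconnected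
    (hF₂.sub hF₁) (mem_ball_self hρ) (mem_ball'.2 hζ) ?_)
  refine ((frequently_mem_frontier_of_interior_closure_eq (by simp) hU hc).and_eventually
    (nhdsWithin_le_nhds (ball_mem_nhds c hρ))).mono fun z hz => ?_
  have hz_cl : z ∈ closure U := frontier_subset_closure hz.1
  rw [Pi.sub_apply, hF₁f z hz.symm, hF₂f z hz.symm, extendFrom_addConstMul hUo f h t hz_cl,
    hh hz_cl, add_sub_cancel_left, inv_mul_cancel_right₀ (hne z hz_cl)]

theorem isGδ_setOf_nowhereExtAp (p : ℕ∞) (U : Set ℂ) :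
    IsGδ {f : ApSpace p U | NowhereExtAp U f.1} := by
  obtain ⟨D, hDU, hDc, hUD⟩ :=
    (TopologicalSpace.IsSeparable.of_separableSpace (frontier U)).exists_countable_dense_subset
  have := hDc.to_subtype
  rw [setOf_nowhereExtAp_eq_iInter hDU hUD]
  exact .iInter_of_isOpen fun q => (isClosed_powerSeriesOnFrontier ..).isOpen_compl

theorem dense_setOf_nowhereExtAp (p : ℕ∞) (hUb : Bornology.IsBounded U)
    (hU : interior (closure U) = U) : Dense {f : ApSpace p U | NowhereExtAp U f.1} := by
  have := baireSpace p (hU ▸ isOpen_interior : IsOpen U)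
  obtain ⟨D, hDU, hDc, hUD⟩ :=
    (TopologicalSpace.IsSeparable.of_separableSpace (frontier U)).exists_countable_dense_subset
  have := hDc.to_subtype
  rw [setOf_nowhereExtAp_eq_iInter hDU hUD]
  exact dense_iInter_of_isOpen (fun q => (isClosed_powerSeriesOnFrontier ..).isOpen_compl) fun q =>
    interior_eq_empty_iff_dense_compl.1 <|
      interior_powerSeriesOnFrontier_eq_empty hUb hU (hDU q.1.2) Nat.one_div_pos_of_nat _

end ApSpace

theorem nowhereHolExtAp_dense_Gdelta_general (p : ℕ∞) {U : Set ℂ} (hUb : Bornology.IsBounded U)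
    (hU : interior (closure U) = U) :
    @Dense (ApSpace p U) (apTop p U) {f | NowhereExtAp U f.1} ∧
    @IsGδ (ApSpace p U) (apTop p U) {f | NowhereExtAp U f.1} :=
  ⟨ApSpace.dense_setOf_nowhereExtAp p hUb hU, ApSpace.isGδ_setOf_nowhereExtAp p U⟩

/-- Let `p ∈ {0,1,2,...} ∪ {∞}` and `Ω ⊆ ℂ` a bounded domain whose boundary is the
union of the images of finitely many pairwise disjoint Jordan curves. The class of
nowhere holomorphically extendable functions in `A^p(Ω)` is a dense and `Gδ` subset
of `A^p(Ω)`. -/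
theorem nowhereHolExtAp_dense_Gdelta
    (p : ℕ∞) (Ω : Set ℂ) (hΩo : IsOpen Ω) (hΩc : IsConnected Ω)
    (hΩb : Bornology.IsBounded Ω)
    (hbdry : ∃ (n : ℕ) (γ : Fin n → ℂ → ℂ),
      (∀ i, ContinuousOn (γ i) (sphere (0 : ℂ) 1) ∧
        Set.InjOn (γ i) (sphere (0 : ℂ) 1)) ∧
      (Pairwise fun i j =>
        Disjoint (γ i '' sphere (0 : ℂ) 1) (γ j '' sphere (0 : ℂ) 1)) ∧
      frontier Ω = ⋃ i, γ i '' sphere (0 : ℂ) 1) :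
    @Dense (ApSpace p Ω) (apTop p Ω) {f | NowhereExtAp Ω f.1} ∧
    @IsGδ (ApSpace p Ω) (apTop p Ω) {f | NowhereExtAp Ω f.1} := by
  obtain ⟨n, γ, hγ, hdisj, hfr⟩ := hbdry
  exact nowhereHolExtAp_dense_Gdelta_general p hΩb
    (interior_closure_eq_of_frontier_eq_iUnion_jordan hΩo hΩc hΩb hγ hdisj hfr)
end

section
/- Let I ⊆ ℝ be an interval and let γ : I → ℂ be a continuous and locally injective curve. Then the interior of γ(I) in ℂ is empty. -/
open Set

/-- `γ` is locally injective on `I`: every point of `I` has a relative neighborhood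
in `I` on which `γ` is injective. -/
def LocallyInjOn (γ : ℝ → ℂ) (I : Set ℝ) : Prop :=
  ∀ t ∈ I, ∃ ε > 0, Set.InjOn γ (I ∩ Ioo (t - ε) (t + ε))

/-!
A compact piece of the domain on which the curve is injective is homeomorphic to its image. If that
image had an interior point, it would contain a sphere around it, and the inverse homeomorphism
would embed the sphere into the line; but by the intermediate value theorem a continuous map from a
sphere to a line identifies some pair of antipodal points. So the images of such pieces are closed
with empty interior. Countably many of them cover the curve, whose image is therefore meagre, and
Baire's theorem applies.
-/

open Filter Metric Topology

variable {X : Type*} [LinearOrder X] [TopologicalSpace X]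

theorem isSigmaCompact_of_ordConnected [OrderTopology X] [CompactIccSpace X]
    [SecondCountableTopology X] {s : Set X} (hs : s.OrdConnected) : IsSigmaCompact s := by
  rcases s.eq_empty_or_nonempty with rfl | hne
  · exact isSigmaCompact_empty
  have : Nonempty s := hne.to_subtype
  obtain ⟨a, ha⟩ := exists_seq_tendsto (atBot : Filter s)
  obtain ⟨b, hb⟩ := exists_seq_tendsto (atTop : Filter s)
  refine ⟨fun n ↦ Icc (a n : X) (b n), fun _ ↦ isCompact_Icc, Subset.antisymm ?_ fun x hx ↦ ?_⟩
  · exact iUnion_subset fun n ↦ hs.out (a n).2 (b n).2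
  · obtain ⟨n, han, hbn⟩ :=
      ((ha.eventually_le_atBot ⟨x, hx⟩).and (hb.eventually_ge_atTop ⟨x, hx⟩)).exists
    exact mem_iUnion.2 ⟨n, han, hbn⟩

section OrderClosedTopology

variable [OrderClosedTopology X]

theorem exists_apply_neg_eq_of_continuous {S : Type*} [TopologicalSpace S] [PreconnectedSpace S]
    [Nonempty S] [InvolutiveNeg S] [ContinuousNeg S] {g : S → X} (hg : Continuous g) :
    ∃ w, g (-w) = g w := by
  obtain ⟨w⟩ := ‹Nonempty S›
  have hg_neg : Continuous fun v ↦ g (-v) := hg.comp continuous_neg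
  rcases le_total (g (-w)) (g w) with h | h
  · exact intermediate_value_univ₂ (a := w) (b := -w) hg_neg hg h (by rwa [neg_neg])
  · exact intermediate_value_univ₂ (a := -w) (b := w) hg_neg hg (by rwa [neg_neg]) h

variable {E : Type*} [NormedAddCommGroup E] [NormedSpace ℝ E]

theorem not_injective_of_continuous_sphere (hE : 1 < Module.rank ℝ E) {r : ℝ} (hr : 0 < r)
    {g : sphere (0 : E) r → X} (hg : Continuous g) : ¬ Function.Injective g := by
  intro hinj
  have : Nontrivial E := (rank_pos_iff_nontrivial (R := ℝ)).1 (zero_lt_one.trans hE)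
  have : Nonempty (sphere (0 : E) r) := (NormedSpace.sphere_nonempty.2 hr.le).to_subtype
  have : PreconnectedSpace (sphere (0 : E) r) :=
    isPreconnected_iff_preconnectedSpace.1 (isPreconnected_sphere hE 0 r)
  obtain ⟨w, hw⟩ := exists_apply_neg_eq_of_continuous hg
  exact ne_neg_of_mem_sphere ℝ hr.ne' w (hinj hw).symm

theorem interior_range_eq_empty_of_isEmbedding (hE : 1 < Module.rank ℝ E) {f : X → E}
    (hf : IsEmbedding f) : interior (range f) = ∅ := by
  refine eq_empty_iff_forall_notMem.2 fun z hz ↦ ?_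
  obtain ⟨r, hr, hball⟩ := nhds_basis_closedBall.mem_iff.1 (mem_interior_iff_mem_nhds.1 hz)
  have hrange (w : sphere (0 : E) r) : ∃ x, f x = z + w :=
    hball (by simp [mem_sphere_zero_iff_norm.1 w.2])
  choose g hg using hrange
  have hfg : f ∘ g = fun w : sphere (0 : E) r ↦ z + w := funext hg
  have hg_cont : Continuous g := hf.continuous_iff.2 (hfg ▸ by fun_prop)
  have hg_inj : Function.Injective g :=
    .of_comp (f := f) (hfg ▸ (add_right_injective z).comp Subtype.val_injective)
  exact not_injective_of_continuous_sphere hE hr hg_cont hg_inj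

theorem isNowhereDense_image_of_isCompact_of_injOn (hE : 1 < Module.rank ℝ E) {f : X → E}
    {K : Set X} (hK : IsCompact K) (hf : ContinuousOn f K) (hinj : InjOn f K) :
    IsNowhereDense (f '' K) := by
  have : CompactSpace K := isCompact_iff_compactSpace.1 hK
  have hemb : IsClosedEmbedding (K.domRestrict f) :=
    hf.domRestrict.isClosedEmbedding hinj.injective
  rw [← range_domRestrict, hemb.isClosed_range.isNowhereDense_iff]
  exact interior_range_eq_empty_of_isEmbedding hE hemb.isEmbedding

theorem isMeagre_image_of_isCompact_of_locally_injOn (hE : 1 < Module.rank ℝ E) {f : X → E}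
    {K : Set X} (hK : IsCompact K) (hf : ContinuousOn f K)
    (hinj : ∀ x ∈ K, ∃ U ∈ 𝓝[K] x, InjOn f U) :
    IsMeagre (f '' K) := by
  have hopen : ∀ x ∈ K, ∃ V, IsOpen V ∧ x ∈ V ∧ InjOn f (V ∩ K) := fun x hx ↦ by
    obtain ⟨U, hU, hUinj⟩ := hinj x hx
    obtain ⟨V, hV, hxV, hVU⟩ := mem_nhdsWithin.1 hU
    exact ⟨V, hV, hxV, hUinj.mono hVU⟩
  choose! V hV hxV hVinj using hopen
  obtain ⟨t, htK, hKt⟩ := hK.elim_nhds_subcover V fun x hx ↦ (hV x hx).mem_nhds (hxV x hx)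
  obtain ⟨C, hC, hCV, rfl⟩ := hK.finite_compact_cover t V (fun x hx ↦ hV x (htK x hx)) hKt
  rw [image_iUnion₂]
  refine isMeagre_biUnion t.countable_toSet fun x hx ↦ IsNowhereDense.isMeagre ?_
  have hCK : C x ⊆ ⋃ y ∈ t, C y := subset_biUnion_of_mem (u := C) hx
  exact isNowhereDense_image_of_isCompact_of_injOn hE (hC x) (hf.mono hCK)
    ((hVinj x (htK x hx)).mono (subset_inter (hCV x) hCK))

theorem isMeagre_image_of_isSigmaCompact_of_locally_injOn (hE : 1 < Module.rank ℝ E) {f : X → E}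
    {s : Set X} (hs : IsSigmaCompact s) (hf : ContinuousOn f s)
    (hinj : ∀ x ∈ s, ∃ U ∈ 𝓝[s] x, InjOn f U) :
    IsMeagre (f '' s) := by
  obtain ⟨K, hK, rfl⟩ := hs
  rw [image_iUnion]
  refine isMeagre_iUnion fun n ↦ ?_
  have hKs : K n ⊆ ⋃ m, K m := subset_iUnion K n
  refine isMeagre_image_of_isCompact_of_locally_injOn hE (hK n) (hf.mono hKs) fun x hx ↦ ?_
  obtain ⟨U, hU, hUinj⟩ := hinj x (hKs hx)
  exact ⟨U, nhdsWithin_mono x hKs hU, hUinj⟩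

theorem interior_image_locallyInjective_curve_empty_general [BaireSpace E]
    (hE : 1 < Module.rank ℝ E) {f : X → E} {s : Set X} (hs : IsSigmaCompact s)
    (hf : ContinuousOn f s) (hinj : ∀ x ∈ s, ∃ U ∈ 𝓝[s] x, InjOn f U) :
    interior (f '' s) = ∅ :=
  interior_eq_empty_iff_dense_compl.2 <|
    dense_of_mem_residual (isMeagre_image_of_isSigmaCompact_of_locally_injOn hE hs hf hinj)

end OrderClosedTopology

theorem LocallyInjOn.exists_mem_nhdsWithin_injOn {γ : ℝ → ℂ} {I : Set ℝ} (h : LocallyInjOn γ I)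
    {t : ℝ} (ht : t ∈ I) : ∃ U ∈ 𝓝[I] t, InjOn γ U := by
  obtain ⟨ε, hε, hinj⟩ := h t ht
  exact ⟨_, inter_mem_nhdsWithin I (Ioo_mem_nhds (by linarith) (by linarith)), hinj⟩

/-- Let `I ⊆ ℝ` be an interval and `γ : I → ℂ` a continuous and locally injective
curve. Then the interior of `γ(I)` in `ℂ` is empty. -/
theorem interior_image_locallyInjective_curve_empty
    (I : Set ℝ) (hI : I.OrdConnected) (γ : ℝ → ℂ)
    (hcont : ContinuousOn γ I) (hinj : LocallyInjOn γ I) :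
    interior (γ '' I) = ∅ :=
  interior_image_locallyInjective_curve_empty_general (by simp [Complex.rank_real_complex])
    (isSigmaCompact_of_ordConnected hI) hcont fun _ ht ↦ hinj.exists_mem_nhdsWithin_injOn ht
end
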